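/- arXiv:2012.12022 — 2 statements merged into one kernel-verified Lean document; each statement's English description precedes it below -/
import Mathlib

section
/- For every n ≥ 1 there exist constants C₁, C₂ > 0 depending only on n such that for all t > 0 and all weakly decreasing x, y ∈ ℝⁿ one has C₁·E ≤ e^{−(|x|²+|y|²)/(4t)}·(∑_{σ∈Sₙ} sgn(σ)·exp((1/(2t))·∑_{k=1}^n x_{σ(k)} y_k))·∏_{1≤i<j≤n}(t+(x_i−x_j)(y_i−y_j)) ≤ C₂·E, where E = e^{−|x−y|²/(4t)}·∏_{1≤i<j≤n}(x_i−x_j)(y_i−y_j). (Equivalently, the W-invariant heat kernel of the flat complex symmetric space of type A_{n−1}, given by p_t^W(x,y) = c·t^{−n/2−γ}·e^{−(|x|²+|y|²)/(4t)}·ψ_x(y/(2t)) with γ = n(n−1)/2, satisfies p_t^W(x,y) ≍ t^{−n/2}·e^{−|x−y|²/(4t)}/∏_{i<j}(t+(x_i−x_j)(y_i−y_j)).) -/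
open Finset MeasureTheory

/-- The map `s ↦ s / (1 + c s)`, comparable to `min s c⁻¹`. -/
noncomputable def saturate (c s : ℝ) : ℝ := s / (1 + c * s)

lemma saturate_nonneg {c s : ℝ} (hc : 0 ≤ c) (hs : 0 ≤ s) : 0 ≤ saturate c s := by
  unfold saturate; positivity

lemma saturate_le_self {c s : ℝ} (hc : 0 ≤ c) (hs : 0 ≤ s) : saturate c s ≤ s := by
  unfold saturate
  exact div_le_self hs (by nlinarith [mul_nonneg hc hs])

lemma mul_saturate_le_one {c s : ℝ} (hc : 0 ≤ c) (hs : 0 ≤ s) : c * saturate c s ≤ 1 := by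
  unfold saturate
  rw [← mul_div_assoc]
  exact div_le_one_of_le₀ (by linarith) (by positivity)

lemma saturate_mono {c s s' : ℝ} (hc : 0 ≤ c) (hs : 0 ≤ s) (h : s ≤ s') :
    saturate c s ≤ saturate c s' := by
  unfold saturate
  have hs' : 0 ≤ s' := hs.trans h
  rw [div_le_div_iff₀ (by positivity) (by positivity)]
  nlinarith

lemma saturate_mul_le {c s l : ℝ} (hc : 0 ≤ c) (hs : 0 ≤ s) (hl : 1 ≤ l) :
    saturate c (l * s) ≤ l * saturate c s := by
  unfold saturate
  have hl' : 0 ≤ l := by linarith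
  rw [← mul_div_assoc]
  refine div_le_div_of_nonneg_left (by positivity) (by positivity) ?_
  nlinarith [mul_nonneg (sub_nonneg.2 hl) (mul_nonneg hc hs)]

lemma saturate_add_saturate {a s c d : ℝ} (ha : 0 ≤ a) (hs : 0 ≤ s) (hc : 0 ≤ c) (hd : 0 ≤ d) :
    saturate c (a + saturate d s) =
      (a + s + a * d * s) / (1 + c * a + d * s + c * s + c * a * d * s) := by
  unfold saturate
  field_simp
  ring

lemma saturate_exchange_le {a s c d : ℝ} (ha : 0 ≤ a) (hs : 0 ≤ s) (hc : 0 ≤ c) (hd : 0 ≤ d) :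
    saturate (c + d) a * saturate c (a + saturate d s) ≤
      4 * (saturate c a * saturate (c + d) (a + s)) := by
  rw [saturate_add_saturate ha hs hc hd]
  unfold saturate
  rw [div_mul_div_comm, div_mul_div_comm, ← mul_div_assoc,
    div_le_div_iff₀ (by positivity) (by positivity)]
  have key : (a + s + a * d * s) * ((1 + c * a) * (1 + (c + d) * (a + s))) ≤
      4 * ((a + s) * ((1 + (c + d) * a) * (1 + c * a + d * s + c * s + c * a * d * s))) := by
    rcases le_total s a with h | h
    · obtain ⟨b, hb, rfl⟩ : ∃ b, 0 ≤ b ∧ a = s + b := ⟨a - s, by linarith, by ring⟩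
      rw [← sub_nonneg]; ring_nf; positivity
    · obtain ⟨b, hb, rfl⟩ : ∃ b, 0 ≤ b ∧ s = a + b := ⟨s - a, by linarith, by ring⟩
      rw [← sub_nonneg]; ring_nf; positivity
  have := mul_le_mul_of_nonneg_left key ha
  linarith

lemma le_saturate_exchange {a s c d : ℝ} (ha : 0 ≤ a) (hs : 0 ≤ s) (hc : 0 ≤ c) (hd : 0 ≤ d) :
    saturate c a * saturate (c + d) (a + s) ≤
      4 * (saturate (c + d) a * saturate c (a + saturate d s)) := by
  rw [saturate_add_saturate ha hs hc hd]
  unfold saturate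
  rw [div_mul_div_comm, div_mul_div_comm, ← mul_div_assoc,
    div_le_div_iff₀ (by positivity) (by positivity)]
  have key : (a + s) * ((1 + (c + d) * a) * (1 + c * a + d * s + c * s + c * a * d * s)) ≤
      4 * ((a + s + a * d * s) * ((1 + c * a) * (1 + (c + d) * (a + s)))) := by
    rcases le_total s a with h | h
    · obtain ⟨b, hb, rfl⟩ : ∃ b, 0 ≤ b ∧ a = s + b := ⟨a - s, by linarith, by ring⟩
      rw [← sub_nonneg]; ring_nf; positivity
    · obtain ⟨b, hb, rfl⟩ : ∃ b, 0 ≤ b ∧ s = a + b := ⟨s - a, by linarith, by ring⟩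
      rw [← sub_nonneg]; ring_nf; positivity
  have := mul_le_mul_of_nonneg_left key ha
  linarith

lemma Fin.prod_Ioi_castSucc {n : ℕ} (i : Fin n) (F : Fin (n + 1) → ℝ) :
    ∏ j ∈ Ioi i.castSucc, F j = (∏ j ∈ Ioi i, F j.castSucc) * F (Fin.last n) := by
  have h {m : ℕ} (k : Fin m) (f : Fin m → ℝ) :
      ∏ j ∈ Ioi k, f j = ∏ j, if k < j then f j else 1 := by
    rw [← Finset.prod_filter]; congr 1; ext; simp
  rw [h, h, Fin.prod_univ_castSucc]
  simp [Fin.castSucc_lt_last]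

lemma Fin.prod_prod_Ioi_castSucc {n : ℕ} (F : Fin (n + 1) → Fin (n + 1) → ℝ) :
    ∏ i, ∏ j ∈ Ioi i, F i j =
      (∏ i : Fin n, ∏ j ∈ Ioi i, F i.castSucc j.castSucc) *
        ∏ i : Fin n, F i.castSucc (Fin.last n) := by
  rw [Fin.prod_univ_castSucc]
  have : Ioi (Fin.last n) = ∅ := by ext j; simp [Fin.le_last]
  simp only [this, Fin.prod_Ioi_castSucc, Finset.prod_mul_distrib, Finset.prod_empty, mul_one]

lemma telescope_saturate_le {n : ℕ} (x : Fin (n + 1) → ℝ) (w : Fin n → ℝ) (hx : Antitone x)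
    (hw : Antitone w) (hw0 : ∀ j, 0 ≤ w j) (i : Fin n) :
    saturate (w i) (x i.castSucc - x i.succ) *
      ∏ j ∈ Ioi i, saturate (w i - w j)
        (x i.castSucc - x j.castSucc + saturate (w j) (x j.castSucc - x j.succ)) ≤
    4 ^ n * ((∏ j ∈ Ioi i, saturate (w i - w j) (x i.castSucc - x j.castSucc)) *
      saturate (w i) (x i.castSucc - x (Fin.last n))) := by
  induction n with
  | zero => exact i.elim0
  | succ n ih =>
    induction i using Fin.lastCases with
    | last =>
      have : Ioi (Fin.last n) = ∅ := by ext j; simp [Fin.le_last]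
      rw [this]
      simp only [prod_empty, mul_one, one_mul, Fin.succ_last]
      exact le_mul_of_one_le_left (saturate_nonneg (hw0 _) (sub_nonneg.2 (hx (Fin.le_last _))))
        (one_le_pow₀ (by norm_num))
    | cast i =>
      have h := ih (x ∘ Fin.castSucc) (w ∘ Fin.castSucc)
        (hx.comp_monotone Fin.strictMono_castSucc.monotone)
        (hw.comp_monotone Fin.strictMono_castSucc.monotone) (fun j => hw0 _) i
      simp only [Function.comp_apply, ← Fin.succ_castSucc] at h
      rw [Fin.prod_Ioi_castSucc, Fin.prod_Ioi_castSucc]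
      have ha : 0 ≤ x i.castSucc.castSucc - x (Fin.last n).castSucc :=
        sub_nonneg.2 (hx (Fin.castSucc_le_castSucc_iff.2 (Fin.le_last _)))
      have hs : 0 ≤ x (Fin.last n).castSucc - x (Fin.last n).succ :=
        sub_nonneg.2 (hx (Fin.castSucc_lt_succ).le)
      have hc : 0 ≤ w i.castSucc - w (Fin.last n) := sub_nonneg.2 (hw (Fin.le_last _))
      have e := saturate_exchange_le ha hs hc (hw0 (Fin.last n))
      rw [sub_add_cancel, sub_add_sub_cancel, Fin.succ_last] at e
      have hP : 0 ≤ ∏ j ∈ Ioi i, saturate (w i.castSucc - w j.castSucc)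
          (x i.castSucc.castSucc - x j.castSucc.castSucc) := by
        refine prod_nonneg fun j hj => saturate_nonneg (sub_nonneg.2 (hw ?_)) (sub_nonneg.2 (hx ?_))
        · exact Fin.castSucc_le_castSucc_iff.2 (mem_Ioi.1 hj).le
        · exact Fin.castSucc_le_castSucc_iff.2
            (Fin.castSucc_le_castSucc_iff.2 (mem_Ioi.1 hj).le)
      have h2 := mul_le_mul_of_nonneg_right h (saturate_nonneg hc
        (add_nonneg ha (saturate_nonneg (hw0 (Fin.last n)) hs)))
      have h3 := mul_le_mul_of_nonneg_left e (mul_nonneg (by positivity : (0 : ℝ) ≤ 4 ^ n) hP)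
      rw [Fin.succ_last] at *
      rw [pow_succ]
      linarith

lemma le_telescope_saturate {n : ℕ} (x : Fin (n + 1) → ℝ) (w : Fin n → ℝ) (hx : Antitone x)
    (hw : Antitone w) (hw0 : ∀ j, 0 ≤ w j) (i : Fin n) :
    (∏ j ∈ Ioi i, saturate (w i - w j) (x i.castSucc - x j.castSucc)) *
      saturate (w i) (x i.castSucc - x (Fin.last n)) ≤
    4 ^ n * (saturate (w i) (x i.castSucc - x i.succ) *
      ∏ j ∈ Ioi i, saturate (w i - w j)
        (x i.castSucc - x j.castSucc + saturate (w j) (x j.castSucc - x j.succ))) := by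
  induction n with
  | zero => exact i.elim0
  | succ n ih =>
    induction i using Fin.lastCases with
    | last =>
      have : Ioi (Fin.last n) = ∅ := by ext j; simp [Fin.le_last]
      rw [this]
      simp only [prod_empty, mul_one, one_mul, Fin.succ_last]
      exact le_mul_of_one_le_left (saturate_nonneg (hw0 _) (sub_nonneg.2 (hx (Fin.le_last _))))
        (one_le_pow₀ (by norm_num))
    | cast i =>
      have h := ih (x ∘ Fin.castSucc) (w ∘ Fin.castSucc)
        (hx.comp_monotone Fin.strictMono_castSucc.monotone)
        (hw.comp_monotone Fin.strictMono_castSucc.monotone) (fun j => hw0 _) i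
      simp only [Function.comp_apply, ← Fin.succ_castSucc] at h
      rw [Fin.prod_Ioi_castSucc, Fin.prod_Ioi_castSucc]
      have ha : 0 ≤ x i.castSucc.castSucc - x (Fin.last n).castSucc :=
        sub_nonneg.2 (hx (Fin.castSucc_le_castSucc_iff.2 (Fin.le_last _)))
      have hs : 0 ≤ x (Fin.last n).castSucc - x (Fin.last n).succ :=
        sub_nonneg.2 (hx (Fin.castSucc_lt_succ).le)
      have hc : 0 ≤ w i.castSucc - w (Fin.last n) := sub_nonneg.2 (hw (Fin.le_last _))
      have e := le_saturate_exchange ha hs hc (hw0 (Fin.last n))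
      rw [sub_add_cancel, sub_add_sub_cancel, Fin.succ_last] at e
      have hP : 0 ≤ ∏ j ∈ Ioi i, saturate (w i.castSucc - w j.castSucc)
          (x i.castSucc.castSucc - x j.castSucc.castSucc) := by
        refine prod_nonneg fun j hj => saturate_nonneg (sub_nonneg.2 (hw ?_)) (sub_nonneg.2 (hx ?_))
        · exact Fin.castSucc_le_castSucc_iff.2 (mem_Ioi.1 hj).le
        · exact Fin.castSucc_le_castSucc_iff.2
            (Fin.castSucc_le_castSucc_iff.2 (mem_Ioi.1 hj).le)
      have h2 := mul_le_mul_of_nonneg_right h (mul_nonneg (by norm_num : (0 : ℝ) ≤ 4)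
        (saturate_nonneg hc (add_nonneg ha (saturate_nonneg (hw0 (Fin.last n)) hs))))
      have h3 := mul_le_mul_of_nonneg_left e hP
      rw [Fin.succ_last] at *
      rw [pow_succ]
      linarith

/-- The alternating sum `∑ σ, sgn σ * exp (∑ k, x (σ k) * y k)` as a determinant. -/
noncomputable def altExp {n : ℕ} (x y : Fin n → ℝ) : ℝ :=
  (Matrix.of fun i j => Real.exp (x i * y j)).det

lemma altExp_eq_sum {n : ℕ} (x y : Fin n → ℝ) :
    altExp x y = ∑ σ : Equiv.Perm (Fin n), ((Equiv.Perm.sign σ : ℤ) : ℝ) *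
      ∏ k, Real.exp (x (σ k) * y k) := by
  rw [altExp, Matrix.det_apply']
  rfl

lemma altExp_eq_sum_symm {n : ℕ} (x y : Fin n → ℝ) :
    altExp x y = ∑ σ : Equiv.Perm (Fin n), ((Equiv.Perm.sign σ : ℤ) : ℝ) *
      ∏ k, Real.exp (x k * y (σ.symm k)) := by
  rw [altExp_eq_sum]
  refine Finset.sum_congr rfl fun σ _ => ?_
  rw [← Equiv.prod_comp σ fun k => Real.exp (x k * y (σ.symm k))]
  simp

/-- Lebesgue measure on the box of those `z` that interlace with `x`. -/
noncomputable def interlacingMeasure {n : ℕ} (x : Fin (n + 1) → ℝ) :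
    Measure (Fin n → ℝ) :=
  Measure.pi fun i =>
    volume.restrict (Set.Ioc (x i.succ) (x i.castSucc))

lemma ae_interlacingMeasure {n : ℕ} (x : Fin (n + 1) → ℝ) :
    ∀ᵐ z ∂interlacingMeasure x, ∀ i, z i ∈ Set.Ioc (x i.succ) (x i.castSucc) := by
  refine Filter.eventually_all.2 fun i => ?_
  exact Measure.tendsto_eval_ae_ae.eventually (ae_restrict_mem measurableSet_Ioc)

lemma integrable_altExp {n : ℕ} (x : Fin (n + 1) → ℝ) (w : Fin n → ℝ) :
    Integrable (fun z => altExp z w) (interlacingMeasure x) := by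
  simp_rw [altExp_eq_sum_symm]
  refine integrable_finsetSum _ fun σ _ => Integrable.const_mul ?_ _
  exact Integrable.fintype_prod (f := fun k z => Real.exp (z * w (σ.symm k))) fun k =>
    (Continuous.integrableOn_Ioc (by fun_prop))

lemma det_integral_exp {n : ℕ} (x : Fin (n + 1) → ℝ) (w : Fin n → ℝ) :
    (Matrix.of fun i j => ∫ z in Set.Ioc (x (Fin.succ i)) (x i.castSucc),
      Real.exp (z * w j)).det = ∫ z, altExp z w ∂interlacingMeasure x := by
  simp_rw [altExp_eq_sum_symm]
  rw [integral_finsetSum _ fun σ _ => Integrable.const_mul (Integrable.fintype_prod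
    (f := fun k z => Real.exp (z * w (σ.symm k))) fun k =>
    (Continuous.integrableOn_Ioc (by fun_prop))) _, Matrix.det_apply']
  refine Finset.sum_congr rfl fun σ _ => ?_
  rw [integral_const_mul, interlacingMeasure,
    integral_fintype_prod_eq_prod (fun k z => Real.exp (z * w (σ.symm k))),
    ← Equiv.prod_comp σ (fun k => ∫ z in Set.Ioc (x (Fin.succ k)) (x k.castSucc),
      Real.exp (z * w (σ.symm k)))]
  simp

lemma mul_integral_exp {a b : ℝ} (h : b ≤ a) (w : ℝ) :
    w * ∫ z in Set.Ioc b a, Real.exp (z * w) = Real.exp (a * w) - Real.exp (b * w) := by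
  rw [← integral_const_mul, ← intervalIntegral.integral_of_le h]
  refine intervalIntegral.integral_eq_sub_of_hasDerivAt (f := fun z => Real.exp (z * w))
    (fun z _ => ?_) (Continuous.intervalIntegrable (by fun_prop) _ _)
  have := ((hasDerivAt_id z).mul_const w).exp
  simpa [mul_comm] using this

lemma altExp_recursion {n : ℕ} (x y : Fin (n + 1) → ℝ) (hx : Antitone x) :
    altExp x y = Real.exp (y (Fin.last n) * ∑ i, x i) *
      ((∏ j : Fin n, (y j.castSucc - y (Fin.last n))) *
        ∫ z, altExp z (fun j : Fin n => y j.castSucc - y (Fin.last n)) ∂interlacingMeasure x) := by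
  set w : Fin n → ℝ := fun j => y j.castSucc - y (Fin.last n) with hw
  let A : Matrix (Fin (n + 1)) (Fin (n + 1)) ℝ :=
    Matrix.of fun i j => Real.exp (x i * (y j - y (Fin.last n)))
  let B : Matrix (Fin (n + 1)) (Fin (n + 1)) ℝ :=
    Matrix.of fun i j => Fin.cases (A 0 j) (fun k => A k.succ j - A k.castSucc j) i
  have hA : altExp x y = Real.exp (y (Fin.last n) * ∑ i, x i) * A.det := by
    rw [mul_sum, Real.exp_sum, ← Matrix.det_mul_column, altExp]
    congr 1
    ext i j
    simp only [A, Matrix.of_apply, ← Real.exp_add]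
    ring_nf
  have hAB : A.det = B.det :=
    Matrix.det_eq_of_forall_row_eq_smul_add_pred (fun _ => 1) (fun j => by simp [B])
      (fun i j => by simp [B])
  have hB : B.det = (-1) ^ n * (B.submatrix Fin.succ Fin.castSucc).det := by
    rw [Matrix.det_succ_column B (Fin.last n), Fin.sum_univ_succ, Finset.sum_eq_zero]
    · simp [B, A]
    · intro i _
      simp [B, A]
  have hN : B.submatrix Fin.succ Fin.castSucc = -Matrix.of fun i j => w j *
      (Matrix.of fun i j => ∫ z in Set.Ioc (x (Fin.succ i)) (x i.castSucc),
        Real.exp (z * w j)) i j := by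
    ext i j
    simp only [Matrix.submatrix_apply, Matrix.neg_apply, Matrix.of_apply]
    rw [mul_integral_exp (hx Fin.castSucc_lt_succ.le)]
    simp [B, A, hw]
  rw [hA, hAB, hB, hN, Matrix.det_neg, Matrix.det_mul_row, det_integral_exp,
    ← mul_assoc ((-1) ^ n)]
  simp [← mul_pow]

lemma integral_inv_sq {a b w : ℝ} (h : b ≤ a) (hw : 0 ≤ w) :
    ∫ z in Set.Ioc b a, ((1 + w * (a - z)) ^ 2)⁻¹ = saturate w (a - b) := by
  have pos : ∀ z ∈ Set.uIcc b a, 1 + w * (a - z) ≠ 0 := by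
    intro z hz
    rw [Set.uIcc_of_le h] at hz
    have := mul_nonneg hw (sub_nonneg.2 hz.2)
    positivity
  rw [← intervalIntegral.integral_of_le h,
    intervalIntegral.integral_eq_sub_of_hasDerivAt (f := fun z => -saturate w (a - z))]
  · simp [saturate]
  · intro z hz
    have h1 : HasDerivAt (fun z => a - z) (-1) z := by
      simpa using (hasDerivAt_id z).const_sub a
    have h2 := ((h1.div ((h1.const_mul w).const_add 1) (pos z hz))).neg
    refine h2.congr_deriv ?_
    have := pos z hz
    field_simp
    ring
  · refine ContinuousOn.intervalIntegrable ?_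
    refine ContinuousOn.inv₀ (by fun_prop) fun z hz => pow_ne_zero _ (pos z hz)

lemma integral_altExp_le {n : ℕ} (x : Fin (n + 1) → ℝ) (w : Fin n → ℝ) (c : ℝ)
    (f : Fin n → ℝ → ℝ) (hf : ∀ i, IntegrableOn (f i) (Set.Ioc (x i.succ) (x i.castSucc)))
    (h : ∀ z : Fin n → ℝ, (∀ i, z i ∈ Set.Ioc (x i.succ) (x i.castSucc)) →
      altExp z w ≤ c * ∏ i, f i (z i)) :
    ∫ z, altExp z w ∂interlacingMeasure x ≤
      c * ∏ i, ∫ z in Set.Ioc (x (Fin.succ i)) (x i.castSucc), f i z := by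
  rw [← integral_fintype_prod_eq_prod, ← integral_const_mul]
  exact integral_mono_ae (integrable_altExp x w) ((Integrable.fintype_prod hf).const_mul c)
    ((ae_interlacingMeasure x).mono h)

lemma le_integral_altExp {n : ℕ} (x : Fin (n + 1) → ℝ) (w : Fin n → ℝ) (c : ℝ)
    (f : Fin n → ℝ → ℝ) (hf : ∀ i, IntegrableOn (f i) (Set.Ioc (x i.succ) (x i.castSucc)))
    (h : ∀ z : Fin n → ℝ, (∀ i, z i ∈ Set.Ioc (x i.succ) (x i.castSucc)) →
      c * ∏ i, f i (z i) ≤ altExp z w) :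
    c * ∏ i, ∫ z in Set.Ioc (x (Fin.succ i)) (x i.castSucc), f i z ≤
      ∫ z, altExp z w ∂interlacingMeasure x := by
  rw [← integral_fintype_prod_eq_prod, ← integral_const_mul]
  exact integral_mono_ae ((Integrable.fintype_prod hf).const_mul c) (integrable_altExp x w)
    ((ae_interlacingMeasure x).mono h)

lemma antitone_of_interlacing {n : ℕ} {x : Fin (n + 1) → ℝ} {z : Fin n → ℝ} (hx : Antitone x)
    (hz : ∀ i, z i ∈ Set.Ioc (x i.succ) (x i.castSucc)) : Antitone z := by
  intro i j hij
  rcases hij.eq_or_lt with rfl | hij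
  · exact le_rfl
  · exact ((hz j).2.trans (hx (Fin.succ_le_castSucc_iff.2 hij))).trans (hz i).1.le

/-- The gap `x j - x (j + 1)`, saturated at the scale `(w j)⁻¹`. -/
noncomputable def satGap {n : ℕ} (x : Fin (n + 1) → ℝ) (w : Fin n → ℝ) (j : Fin n) : ℝ :=
  saturate (w j) (x j.castSucc - x j.succ)

lemma satGap_nonneg {n : ℕ} {x : Fin (n + 1) → ℝ} {w : Fin n → ℝ} (hx : Antitone x)
    (hw0 : ∀ j, 0 ≤ w j) (j : Fin n) : 0 ≤ satGap x w j :=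
  saturate_nonneg (hw0 j) (sub_nonneg.2 (hx Fin.castSucc_lt_succ.le))

lemma saturate_widened_nonneg {n : ℕ} {x : Fin (n + 1) → ℝ} {w : Fin n → ℝ} (hx : Antitone x)
    (hw : Antitone w) (hw0 : ∀ j, 0 ≤ w j) {i j : Fin n} (hij : i < j) :
    0 ≤ saturate (w i - w j) (x i.castSucc - x j.castSucc + satGap x w j) :=
  saturate_nonneg (sub_nonneg.2 (hw hij.le)) (add_nonneg
    (sub_nonneg.2 (hx (Fin.castSucc_le_castSucc_iff.2 hij.le))) (satGap_nonneg hx hw0 j))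

lemma prod_saturate_le_of_interlacing {n : ℕ} {x : Fin (n + 1) → ℝ} {w z : Fin n → ℝ}
    (hx : Antitone x) (hw : Antitone w) (hw0 : ∀ j, 0 ≤ w j)
    (hz : ∀ i, z i ∈ Set.Ioc (x i.succ) (x i.castSucc)) :
    ∏ i, ∏ j ∈ Ioi i, saturate (w i - w j) (z i - z j) ≤
      (∏ j, (1 + w j * (x j.castSucc - z j)) ^ n) *
        ∏ i, ∏ j ∈ Ioi i, saturate (w i - w j) (x i.castSucc - x j.castSucc + satGap x w j) := by
  have hz' := antitone_of_interlacing hx hz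
  have hone (j) : 1 ≤ 1 + w j * (x j.castSucc - z j) :=
    le_add_of_nonneg_right (mul_nonneg (hw0 j) (sub_nonneg.2 (hz j).2))
  calc ∏ i, ∏ j ∈ Ioi i, saturate (w i - w j) (z i - z j)
      ≤ ∏ i, ∏ j ∈ Ioi i, ((1 + w j * (x j.castSucc - z j)) *
          saturate (w i - w j) (x i.castSucc - x j.castSucc + satGap x w j)) := by
        have hzz {i j : Fin n} (hij : i < j) : 0 ≤ saturate (w i - w j) (z i - z j) :=
          saturate_nonneg (sub_nonneg.2 (hw hij.le)) (sub_nonneg.2 (hz' hij.le))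
        refine prod_le_prod (fun i _ => prod_nonneg fun j hj => hzz (mem_Ioi.1 hj)) fun i _ =>
          prod_le_prod (fun j hj => hzz (mem_Ioi.1 hj)) fun j hj => ?_
        have hij := mem_Ioi.1 hj
        have hc := sub_nonneg.2 (hw hij.le)
        have ha := sub_nonneg.2 (hx (Fin.castSucc_le_castSucc_iff.2 hij.le))
        refine le_trans (saturate_mono hc (sub_nonneg.2 (hz' hij.le)) ?_)
          (saturate_mul_le hc (add_nonneg ha (satGap_nonneg hx hw0 j)) (hone j))
        have hu : x j.castSucc - z j ≤ (1 + w j * (x j.castSucc - z j)) * satGap x w j := by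
          have h1 := (hz j).1
          have h2 := (hz j).2
          have h3 : 0 ≤ w j * (x j.castSucc - x j.succ) :=
            mul_nonneg (hw0 j) (by linarith)
          rw [satGap, saturate, ← mul_div_assoc, le_div_iff₀ (by linarith)]
          linarith
        have := mul_le_mul_of_nonneg_right (hone j) ha
        linarith [(hz i).2]
    _ = (∏ i : Fin n, ∏ j ∈ Ioi i, (1 + w j * (x j.castSucc - z j))) *
          ∏ i, ∏ j ∈ Ioi i, saturate (w i - w j)
            (x i.castSucc - x j.castSucc + satGap x w j) := by
        simp only [prod_mul_distrib]
    _ ≤ _ := by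
        refine mul_le_mul_of_nonneg_right ?_
          (prod_nonneg fun i _ => prod_nonneg fun j hj => saturate_widened_nonneg hx hw hw0 (mem_Ioi.1 hj))
        have hn : ∏ j, (1 + w j * (x j.castSucc - z j)) ^ n =
            ∏ _i : Fin n, ∏ j, (1 + w j * (x j.castSucc - z j)) := by
          simp [prod_pow]
        rw [hn]
        refine prod_le_prod (fun i _ => prod_nonneg fun j _ => zero_le_one.trans (hone j))
          fun i _ => ?_
        rw [← prod_mul_prod_compl (Ioi i)]
        exact le_mul_of_one_le_right (prod_nonneg fun j _ => zero_le_one.trans (hone j))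
          (Finset.one_le_prod fun j _ => hone j)

lemma le_prod_saturate_of_interlacing {n : ℕ} {x : Fin (n + 1) → ℝ} {w z : Fin n → ℝ}
    (hx : Antitone x) (hw : Antitone w) (hw0 : ∀ j, 0 ≤ w j)
    (hz : ∀ i, x i.castSucc - z i ∈ Set.Icc (satGap x w i / 4) (satGap x w i / 2)) :
    ∏ i, ∏ j ∈ Ioi i, saturate (w i - w j) (x i.castSucc - x j.castSucc + satGap x w j) ≤
      4 ^ (n * n) * ∏ i, ∏ j ∈ Ioi i, saturate (w i - w j) (z i - z j) := by
  have hle {i j : Fin n} (hij : i < j) :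
      x i.castSucc - x j.castSucc + satGap x w j ≤ 4 * (z i - z j) := by
    have h1 : satGap x w i ≤ x i.castSucc - x i.succ :=
      saturate_le_self (hw0 i) (sub_nonneg.2 (hx Fin.castSucc_lt_succ.le))
    have h2 := hx (Fin.succ_le_castSucc_iff.2 hij)
    have h3 := hx (Fin.castSucc_lt_succ (i := i)).le
    linarith [(hz i).2, (hz j).1]
  have hz' {i j : Fin n} (hij : i < j) : 0 ≤ z i - z j := by
    have ha := sub_nonneg.2 (hx (Fin.castSucc_le_castSucc_iff.2 hij.le))
    linarith [hle hij, satGap_nonneg hx hw0 j]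
  calc _ ≤ ∏ i, ∏ j ∈ Ioi i, (4 * saturate (w i - w j) (z i - z j)) := by
        refine prod_le_prod (fun i _ => prod_nonneg fun j hj =>
          saturate_widened_nonneg hx hw hw0 (mem_Ioi.1 hj)) fun i _ => prod_le_prod
          (fun j hj => saturate_widened_nonneg hx hw hw0 (mem_Ioi.1 hj)) fun j hj => ?_
        have hij := mem_Ioi.1 hj
        have hc := sub_nonneg.2 (hw hij.le)
        have ha := sub_nonneg.2 (hx (Fin.castSucc_le_castSucc_iff.2 hij.le))
        exact (saturate_mono hc (add_nonneg ha (satGap_nonneg hx hw0 j)) (hle hij)).trans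
          (saturate_mul_le hc (hz' hij) (by norm_num))
    _ ≤ _ := by
        simp only [prod_mul_distrib]
        refine mul_le_mul_of_nonneg_right ?_ (prod_nonneg fun i _ => prod_nonneg fun j hj =>
          saturate_nonneg (sub_nonneg.2 (hw (mem_Ioi.1 hj).le)) (hz' (mem_Ioi.1 hj)))
        calc ∏ i : Fin n, ∏ _j ∈ Ioi i, (4 : ℝ) ≤ ∏ _i : Fin n, (4 : ℝ) ^ n := by
              refine prod_le_prod (fun i _ => by positivity) fun i _ => ?_
              rw [prod_const]
              exact pow_le_pow_right₀ (by norm_num) ((card_le_univ _).trans (by simp))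
          _ = 4 ^ (n * n) := by simp [pow_mul]

lemma exp_neg_mul_one_add_pow_le (n : ℕ) {v : ℝ} (hv : 0 ≤ v) :
    Real.exp (-v) * (1 + v) ^ n ≤
      ((n + 2).factorial * Real.exp 1) * ((1 + v) ^ 2)⁻¹ := by
  have h := Real.pow_div_factorial_le_exp (1 + v) (by linarith) (n + 2)
  rw [div_le_iff₀ (by positivity), Real.exp_add] at h
  rw [← div_eq_mul_inv, le_div_iff₀ (by positivity), Real.exp_neg, mul_assoc, ← pow_add,
    inv_mul_le_iff₀ (Real.exp_pos v)]
  linarith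

lemma prod_satGap_mul_le {n : ℕ} {x : Fin (n + 1) → ℝ} {w : Fin n → ℝ}
    (hx : Antitone x) (hw : Antitone w) (hw0 : ∀ j, 0 ≤ w j) :
    (∏ i, satGap x w i) *
      ∏ i, ∏ j ∈ Ioi i, saturate (w i - w j) (x i.castSucc - x j.castSucc + satGap x w j) ≤
    4 ^ (n * n) * ((∏ i, ∏ j ∈ Ioi i, saturate (w i - w j) (x i.castSucc - x j.castSucc)) *
      ∏ i, saturate (w i) (x i.castSucc - x (Fin.last n))) := by
  have e : (4 : ℝ) ^ (n * n) = ∏ _i : Fin n, 4 ^ n := by simp [pow_mul]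
  rw [e, ← prod_mul_distrib, ← prod_mul_distrib, ← prod_mul_distrib]
  exact prod_le_prod (fun i _ => mul_nonneg (satGap_nonneg hx hw0 i) (prod_nonneg fun j hj =>
    saturate_widened_nonneg hx hw hw0 (mem_Ioi.1 hj)))
    fun i _ => telescope_saturate_le x w hx hw hw0 i

lemma le_prod_satGap_mul {n : ℕ} {x : Fin (n + 1) → ℝ} {w : Fin n → ℝ}
    (hx : Antitone x) (hw : Antitone w) (hw0 : ∀ j, 0 ≤ w j) :
    (∏ i, ∏ j ∈ Ioi i, saturate (w i - w j) (x i.castSucc - x j.castSucc)) *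
      ∏ i, saturate (w i) (x i.castSucc - x (Fin.last n)) ≤
    4 ^ (n * n) * ((∏ i, satGap x w i) *
      ∏ i, ∏ j ∈ Ioi i,
        saturate (w i - w j) (x i.castSucc - x j.castSucc + satGap x w j)) := by
  have e : (4 : ℝ) ^ (n * n) = ∏ _i : Fin n, 4 ^ n := by simp [pow_mul]
  rw [e, ← prod_mul_distrib, ← prod_mul_distrib, ← prod_mul_distrib]
  refine prod_le_prod (fun i _ => mul_nonneg (prod_nonneg fun j hj => ?_)
    (saturate_nonneg (hw0 i) (sub_nonneg.2 (hx (Fin.le_last _)))))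
    fun i _ => le_telescope_saturate x w hx hw hw0 i
  exact saturate_nonneg (sub_nonneg.2 (hw (mem_Ioi.1 hj).le))
      (sub_nonneg.2 (hx (Fin.castSucc_le_castSucc_iff.2 (mem_Ioi.1 hj).le)))

/-- The product over pairs `i < j` of `(y i - y j) (x i - x j) / (1 + (y i - y j) (x i - x j))`. -/
noncomputable def pairProd {n : ℕ} (x y : Fin n → ℝ) : ℝ :=
  ∏ i, ∏ j ∈ Ioi i, ((y i - y j) * saturate (y i - y j) (x i - x j))

lemma pairProd_nonneg {n : ℕ} {x y : Fin n → ℝ} (hx : Antitone x) (hy : Antitone y) :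
    0 ≤ pairProd x y :=
  prod_nonneg fun _ _ => prod_nonneg fun _ hj =>
    mul_nonneg (sub_nonneg.2 (hy (mem_Ioi.1 hj).le)) (saturate_nonneg
      (sub_nonneg.2 (hy (mem_Ioi.1 hj).le)) (sub_nonneg.2 (hx (mem_Ioi.1 hj).le)))

lemma prod_prod_sub_nonneg {n : ℕ} {w : Fin n → ℝ} (hw : Antitone w) :
    0 ≤ ∏ i, ∏ j ∈ Ioi i, (w i - w j) :=
  prod_nonneg fun _ _ => prod_nonneg fun _ hj => sub_nonneg.2 (hw (mem_Ioi.1 hj).le)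

lemma exp_sum_mul_eq {n : ℕ} (x : Fin (n + 1) → ℝ) (z w : Fin n → ℝ) :
    Real.exp (∑ j, z j * w j) = Real.exp (∑ j, x j.castSucc * w j) *
      ∏ j, Real.exp (-(w j * (x j.castSucc - z j))) := by
  rw [← Real.exp_sum, ← Real.exp_add, ← sum_add_distrib]
  congr 1
  exact sum_congr rfl fun j _ => by ring

lemma integral_altExp_upper {n : ℕ} {C : ℝ} (hC : 0 ≤ C) {x : Fin (n + 1) → ℝ} {w : Fin n → ℝ}
    (hx : Antitone x) (hw : Antitone w) (hw0 : ∀ j, 0 ≤ w j)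
    (h : ∀ z : Fin n → ℝ, Antitone z →
      altExp z w ≤ C * (Real.exp (∑ k, z k * w k) * pairProd z w)) :
    ∫ z, altExp z w ∂interlacingMeasure x ≤
      C * ((n + 2).factorial * Real.exp 1) ^ n *
        (Real.exp (∑ j, x j.castSucc * w j) * (∏ i, ∏ j ∈ Ioi i, (w i - w j)) *
          ∏ i, ∏ j ∈ Ioi i,
            saturate (w i - w j) (x i.castSucc - x j.castSucc + satGap x w j)) *
      ∏ j, satGap x w j := by
  have hr (j : Fin n) : satGap x w j = ∫ z in Set.Ioc (x (Fin.succ j)) (x j.castSucc),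
      ((1 + w j * (x j.castSucc - z)) ^ 2)⁻¹ :=
    (integral_inv_sq (hx Fin.castSucc_lt_succ.le) (hw0 j)).symm
  rw [prod_congr rfl fun j _ => hr j]
  have hG : 0 ≤ ∏ i, ∏ j ∈ Ioi i,
      saturate (w i - w j) (x i.castSucc - x j.castSucc + satGap x w j) :=
    prod_nonneg fun i _ => prod_nonneg fun j hj =>
      saturate_widened_nonneg hx hw hw0 (mem_Ioi.1 hj)
  set G := ∏ i, ∏ j ∈ Ioi i,
      saturate (w i - w j) (x i.castSucc - x j.castSucc + satGap x w j) with hGdef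
  have hA := prod_prod_sub_nonneg hw
  refine integral_altExp_le x w _ (fun j z => ((1 + w j * (x j.castSucc - z)) ^ 2)⁻¹)
    (fun j => ?_) fun z hz => ?_
  · refine (ContinuousOn.integrableOn_Icc ?_).mono_set Set.Ioc_subset_Icc_self
    refine ContinuousOn.inv₀ (by fun_prop) fun z hz => ?_
    have := mul_nonneg (hw0 j) (sub_nonneg.2 hz.2)
    positivity
  · refine (h z (antitone_of_interlacing hx hz)).trans ?_
    have hu (j) : 0 ≤ w j * (x j.castSucc - z j) := mul_nonneg (hw0 j) (sub_nonneg.2 (hz j).2)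
    have h1 := prod_saturate_le_of_interlacing hx hw hw0 hz
    rw [← hGdef] at h1
    have h2 : (∏ j, Real.exp (-(w j * (x j.castSucc - z j)))) *
        ∏ j, (1 + w j * (x j.castSucc - z j)) ^ n ≤
        ((n + 2).factorial * Real.exp 1) ^ n *
          ∏ j, ((1 + w j * (x j.castSucc - z j)) ^ 2)⁻¹ := by
      have e : ((n + 2).factorial * Real.exp 1) ^ n =
          ∏ _j : Fin n, ((n + 2).factorial * Real.exp 1) := by simp
      rw [e, ← prod_mul_distrib, ← prod_mul_distrib]
      exact prod_le_prod (fun j _ => by have := hu j; positivity)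
        fun j _ => exp_neg_mul_one_add_pow_le n (hu j)
    simp only [pairProd, prod_mul_distrib]
    rw [exp_sum_mul_eq x z w]
    set E := Real.exp (∑ j, x j.castSucc * w j)
    set A := ∏ i, ∏ j ∈ Ioi i, (w i - w j)
    have hE : 0 ≤ E := (Real.exp_pos _).le
    calc _ ≤ C * (E * (∏ j, Real.exp (-(w j * (x j.castSucc - z j)))) *
          (A * ((∏ j, (1 + w j * (x j.castSucc - z j)) ^ n) * G))) := by gcongr
      _ = (C * (E * A * G)) * ((∏ j, Real.exp (-(w j * (x j.castSucc - z j)))) *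
          ∏ j, (1 + w j * (x j.castSucc - z j)) ^ n) := by ring
      _ ≤ (C * (E * A * G)) * (((n + 2).factorial * Real.exp 1) ^ n *
          ∏ j, ((1 + w j * (x j.castSucc - z j)) ^ 2)⁻¹) := by gcongr
      _ = _ := by ring

lemma integral_altExp_lower {n : ℕ} {C : ℝ} (hC : 0 ≤ C) {x : Fin (n + 1) → ℝ} {w : Fin n → ℝ}
    (hx : Antitone x) (hw : Antitone w) (hw0 : ∀ j, 0 ≤ w j)
    (h : ∀ z : Fin n → ℝ, Antitone z →
      C * (Real.exp (∑ k, z k * w k) * pairProd z w) ≤ altExp z w) :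
    C * (Real.exp (-1) / 4) ^ n / 4 ^ (n * n) *
        (Real.exp (∑ j, x j.castSucc * w j) * (∏ i, ∏ j ∈ Ioi i, (w i - w j)) *
          ∏ i, ∏ j ∈ Ioi i,
            saturate (w i - w j) (x i.castSucc - x j.castSucc + satGap x w j)) *
      ∏ j, satGap x w j ≤ ∫ z, altExp z w ∂interlacingMeasure x := by
  let S (j : Fin n) : Set ℝ :=
    Set.Ioc (x j.castSucc - satGap x w j / 2) (x j.castSucc - satGap x w j / 4)
  have hS (j : Fin n) : S j ⊆ Set.Ioc (x j.succ) (x j.castSucc) := by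
    have h0 := satGap_nonneg hx hw0 j
    have h1 : satGap x w j ≤ x j.castSucc - x j.succ :=
      saturate_le_self (hw0 j) (sub_nonneg.2 (hx Fin.castSucc_lt_succ.le))
    exact Set.Ioc_subset_Ioc (by linarith) (by linarith)
  have hr (j : Fin n) : satGap x w j / 4 = ∫ z in Set.Ioc (x (Fin.succ j)) (x j.castSucc),
      (S j).indicator (fun _ => (1 : ℝ)) z := by
    rw [integral_indicator measurableSet_Ioc, Measure.restrict_restrict measurableSet_Ioc,
      Set.inter_eq_left.2 (hS j)]
    have h0 := satGap_nonneg hx hw0 j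
    simp only [integral_const, smul_eq_mul, mul_one, measureReal_restrict_apply_univ, S,
      Real.volume_real_Ioc]
    rw [max_eq_left (by linarith)]
    ring
  have hG : 0 ≤ ∏ i, ∏ j ∈ Ioi i,
      saturate (w i - w j) (x i.castSucc - x j.castSucc + satGap x w j) :=
    prod_nonneg fun i _ => prod_nonneg fun j hj =>
      saturate_widened_nonneg hx hw hw0 (mem_Ioi.1 hj)
  set G := ∏ i, ∏ j ∈ Ioi i,
      saturate (w i - w j) (x i.castSucc - x j.castSucc + satGap x w j) with hGdef
  have hA := prod_prod_sub_nonneg hw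
  set A := ∏ i, ∏ j ∈ Ioi i, (w i - w j) with hAdef
  set E := Real.exp (∑ j, x j.castSucc * w j) with hEdef
  have hE : 0 ≤ E := (Real.exp_pos _).le
  have hprod : C * (Real.exp (-1) / 4) ^ n / 4 ^ (n * n) * (E * A * G) * ∏ j, satGap x w j =
      C * Real.exp (-1) ^ n / 4 ^ (n * n) * (E * A * G) *
        ∏ j, ∫ z in Set.Ioc (x (Fin.succ j)) (x j.castSucc),
          (S j).indicator (fun _ => (1 : ℝ)) z := by
    rw [← prod_congr rfl fun j _ => hr j, prod_div_distrib]
    simp only [prod_const, card_univ, Fintype.card_fin, div_pow]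
    ring
  rw [hprod]
  refine le_integral_altExp x w _ (fun j => (S j).indicator fun _ => (1 : ℝ))
    (fun j => ?_) fun z hz => ?_
  · exact ((integrableOn_const (by simp)).indicator measurableSet_Ioc)
  have hz' := antitone_of_interlacing hx hz
  by_cases hzS : ∀ j, z j ∈ S j
  · rw [prod_congr rfl fun j _ => Set.indicator_of_mem (hzS j) _, prod_const_one, mul_one]
    refine le_trans ?_ (h z hz')
    have hu (j) : x j.castSucc - z j ∈ Set.Icc (satGap x w j / 4) (satGap x w j / 2) :=
      ⟨by linarith [(hzS j).2], by linarith [(hzS j).1]⟩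
    have h1 := le_prod_saturate_of_interlacing hx hw hw0 hu
    rw [← hGdef] at h1
    have h2 : Real.exp (-1) ^ n ≤ ∏ j, Real.exp (-(w j * (x j.castSucc - z j))) := by
      have e : Real.exp (-1) ^ n = ∏ _j : Fin n, Real.exp (-1) := by simp
      rw [e]
      refine prod_le_prod (fun j _ => (Real.exp_pos _).le) fun j _ => Real.exp_le_exp.2 ?_
      have h3 := mul_le_mul_of_nonneg_left (hu j).2 (hw0 j)
      have h4 : w j * satGap x w j ≤ 1 :=
        mul_saturate_le_one (hw0 j) (sub_nonneg.2 (hx Fin.castSucc_lt_succ.le))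
      linarith
    simp only [pairProd, prod_mul_distrib]
    rw [exp_sum_mul_eq x z w, ← hAdef, ← hEdef]
    calc _ = C * (E * Real.exp (-1) ^ n * (A * (G / 4 ^ (n * n)))) := by ring
      _ ≤ _ := by
        have h3 := (div_le_iff₀' (by positivity)).2 h1
        gcongr
  · push Not at hzS
    obtain ⟨j, hj⟩ := hzS
    rw [prod_eq_zero (mem_univ j) (Set.indicator_of_notMem hj _), mul_zero]
    exact le_trans (mul_nonneg hC (mul_nonneg (Real.exp_pos _).le (pairProd_nonneg hz' hw)))
      (h z hz')

lemma exists_altExp_bounds (n : ℕ) : ∃ C₁ C₂ : ℝ, 0 < C₁ ∧ 0 < C₂ ∧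
    ∀ x y : Fin n → ℝ, Antitone x → Antitone y →
      C₁ * (Real.exp (∑ k, x k * y k) * pairProd x y) ≤ altExp x y ∧
      altExp x y ≤ C₂ * (Real.exp (∑ k, x k * y k) * pairProd x y) := by
  induction n with
  | zero => exact ⟨1, 1, one_pos, one_pos, fun x y _ _ => by simp [altExp, pairProd]⟩
  | succ n ih =>
    obtain ⟨C₁, C₂, h₁, h₂, h⟩ := ih
    refine ⟨C₁ * (Real.exp (-1) / 4) ^ n / 4 ^ (n * n) / 4 ^ (n * n),
      C₂ * ((n + 2).factorial * Real.exp 1) ^ n * 4 ^ (n * n), by positivity, by positivity,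
      fun x y hx hy => ?_⟩
    let w : Fin n → ℝ := fun j => y j.castSucc - y (Fin.last n)
    have hw : Antitone w := fun i j hij =>
      sub_le_sub_right (hy (Fin.castSucc_le_castSucc_iff.2 hij)) _
    have hw0 (j) : 0 ≤ w j := sub_nonneg.2 (hy (Fin.le_last _))
    have hlow := integral_altExp_lower h₁.le hx hw hw0 fun z hz => (h z w hz hw).1
    have hupp := integral_altExp_upper h₂.le hx hw hw0 fun z hz => (h z w hz hw).2
    have hR := prod_satGap_mul_le hx hw hw0
    have hT := le_prod_satGap_mul hx hw hw0
    have hA := prod_prod_sub_nonneg hw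
    have hW : 0 ≤ ∏ j, w j := prod_nonneg fun j _ => hw0 j
    have hexp : Real.exp (∑ k, x k * y k) =
        Real.exp (y (Fin.last n) * ∑ i, x i) * Real.exp (∑ j, x j.castSucc * w j) := by
      rw [← Real.exp_add, Fin.sum_univ_castSucc, Fin.sum_univ_castSucc, mul_add, mul_sum,
        add_right_comm, ← sum_add_distrib]
      congr 1
      refine congrArg₂ _ (sum_congr rfl fun j _ => ?_) (mul_comm _ _)
      simp only [w]
      ring
    have hpair : pairProd x y = (∏ i, ∏ j ∈ Ioi i, (w i - w j)) * (∏ j, w j) *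
        ((∏ i, ∏ j ∈ Ioi i, saturate (w i - w j) (x i.castSucc - x j.castSucc)) *
          ∏ i, saturate (w i) (x i.castSucc - x (Fin.last n))) := by
      rw [pairProd, Fin.prod_prod_Ioi_castSucc]
      simp only [w, sub_sub_sub_cancel_right, prod_mul_distrib]
      ring
    rw [altExp_recursion x y hx, hexp, hpair]
    change _ ≤ _ * ((∏ j, w j) * ∫ z, altExp z w ∂interlacingMeasure x) ∧
      _ * ((∏ j, w j) * ∫ z, altExp z w ∂interlacingMeasure x) ≤ _
    set I := ∫ z, altExp z w ∂interlacingMeasure x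
    set A := ∏ i, ∏ j ∈ Ioi i, (w i - w j)
    set W := ∏ j, w j
    set G := ∏ i, ∏ j ∈ Ioi i,
      saturate (w i - w j) (x i.castSucc - x j.castSucc + satGap x w j)
    set r := ∏ j, satGap x w j
    set T := (∏ i, ∏ j ∈ Ioi i, saturate (w i - w j) (x i.castSucc - x j.castSucc)) *
      ∏ i, saturate (w i) (x i.castSucc - x (Fin.last n))
    set E := Real.exp (∑ j, x j.castSucc * w j)
    set F := Real.exp (y (Fin.last n) * ∑ i, x i)
    have hE : 0 ≤ E := (Real.exp_pos _).le
    have hF : 0 ≤ F := (Real.exp_pos _).le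
    constructor
    · set c := C₁ * (Real.exp (-1) / 4) ^ n / 4 ^ (n * n) with hc
      have hc0 : 0 ≤ c := by positivity
      have hT' : T / 4 ^ (n * n) ≤ r * G := (div_le_iff₀' (by positivity)).2 hT
      calc _ = F * (W * (c * (E * A) * (T / 4 ^ (n * n)))) := by ring
        _ ≤ F * (W * (c * (E * A) * (r * G))) := by gcongr
        _ = F * (W * (c * (E * A * G) * r)) := by ring
        _ ≤ _ := by gcongr
    · set c := C₂ * ((n + 2).factorial * Real.exp 1) ^ n with hc
      have hc0 : 0 ≤ c := by positivity
      calc _ ≤ F * (W * (c * (E * A * G) * r)) := by gcongr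
        _ = F * (W * (c * (E * A) * (r * G))) := by ring
        _ ≤ F * (W * (c * (E * A) * (4 ^ (n * n) * T))) := by gcongr
        _ = _ := by ring

/-- Sharp estimate for the `W`-invariant heat kernel of the flat complex symmetric space of
type `A_{n-1}`: for `t > 0` and weakly decreasing `x, y`,
`e^{−(|x|²+|y|²)/(4t)} · (∑_σ sgn σ · e^{(1/(2t))∑ x_{σ(k)} y_k}) · ∏_{i<j}(t+(x_i−x_j)(y_i−y_j))
 ≍ e^{−|x−y|²/(4t)} · ∏_{i<j}(x_i−x_j)(y_i−y_j)`, with constants depending only on `n`. -/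
theorem flat_heat_kernel_estimate_An (n : ℕ) (hn : 1 ≤ n) :
    ∃ C₁ C₂ : ℝ, 0 < C₁ ∧ 0 < C₂ ∧
      ∀ t : ℝ, 0 < t → ∀ x y : Fin n → ℝ, Antitone x → Antitone y →
        C₁ * (Real.exp (-(∑ k, (x k - y k) ^ 2) / (4 * t)) *
              ∏ i : Fin n, ∏ j ∈ Finset.Ioi i, (x i - x j) * (y i - y j)) ≤
            Real.exp (-((∑ k, x k ^ 2) + ∑ k, y k ^ 2) / (4 * t)) *
              (∑ σ : Equiv.Perm (Fin n), ((Equiv.Perm.sign σ : ℤ) : ℝ) *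
                Real.exp ((1 / (2 * t)) * ∑ k, x (σ k) * y k)) *
              (∏ i : Fin n, ∏ j ∈ Finset.Ioi i, (t + (x i - x j) * (y i - y j))) ∧
        Real.exp (-((∑ k, x k ^ 2) + ∑ k, y k ^ 2) / (4 * t)) *
              (∑ σ : Equiv.Perm (Fin n), ((Equiv.Perm.sign σ : ℤ) : ℝ) *
                Real.exp ((1 / (2 * t)) * ∑ k, x (σ k) * y k)) *
              (∏ i : Fin n, ∏ j ∈ Finset.Ioi i, (t + (x i - x j) * (y i - y j))) ≤
          C₂ * (Real.exp (-(∑ k, (x k - y k) ^ 2) / (4 * t)) *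
              ∏ i : Fin n, ∏ j ∈ Finset.Ioi i, (x i - x j) * (y i - y j)) := by
  obtain ⟨C₁, C₂, h₁, h₂, h⟩ := exists_altExp_bounds n
  refine ⟨C₁ * ∏ i : Fin n, ∏ _j ∈ Ioi i, (1 / 2 : ℝ), C₂, ?_, h₂, fun t ht x y hx hy => ?_⟩
  · exact mul_pos h₁ (prod_pos fun i _ => prod_pos fun j _ => by norm_num)
  let u : Fin n → ℝ := fun k => x k / (2 * t)
  have hu : Antitone u := fun i j hij => div_le_div_of_nonneg_right (hx hij) (by positivity)
  have hxu (k) : x k = 2 * t * u k := by simp only [u]; field_simp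
  have hsum : ∑ σ : Equiv.Perm (Fin n), ((Equiv.Perm.sign σ : ℤ) : ℝ) *
      Real.exp ((1 / (2 * t)) * ∑ k, x (σ k) * y k) = altExp u y := by
    rw [altExp_eq_sum]
    refine sum_congr rfl fun σ _ => ?_
    rw [← Real.exp_sum, mul_sum]
    congr 2
    refine sum_congr rfl fun k _ => ?_
    simp only [u]
    ring
  have hexp : Real.exp (-(∑ k, (x k - y k) ^ 2) / (4 * t)) =
      Real.exp (-((∑ k, x k ^ 2) + ∑ k, y k ^ 2) / (4 * t)) * Real.exp (∑ k, u k * y k) := by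
    rw [← Real.exp_add]
    congr 1
    rw [div_add' _ _ _ (by positivity)]
    congr 1
    rw [sum_mul, ← sum_add_distrib, ← sum_neg_distrib, ← sum_neg_distrib, ← sum_add_distrib]
    refine sum_congr rfl fun k _ => ?_
    rw [hxu k]
    ring
  have hpos {i j : Fin n} (hij : i < j) : 0 ≤ (u i - u j) * (y i - y j) :=
    mul_nonneg (sub_nonneg.2 (hu hij.le)) (sub_nonneg.2 (hy hij.le))
  have hfac {i j : Fin n} (hij : i < j) : (x i - x j) * (y i - y j) =
      (y i - y j) * saturate (y i - y j) (u i - u j) *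
        (2 * t * (1 + (u i - u j) * (y i - y j))) := by
    have := hpos hij
    rw [hxu i, hxu j, saturate, mul_comm (y i - y j) (u i - u j)]
    field_simp
  have hxy {i j : Fin n} : (x i - x j) * (y i - y j) = 2 * t * ((u i - u j) * (y i - y j)) := by
    rw [hxu i, hxu j]; ring
  have hprod : ∏ i : Fin n, ∏ j ∈ Ioi i, (x i - x j) * (y i - y j) =
      pairProd u y * ∏ i : Fin n, ∏ j ∈ Ioi i, (2 * t * (1 + (u i - u j) * (y i - y j))) := by
    simp only [pairProd, ← prod_mul_distrib]
    exact prod_congr rfl fun i _ => prod_congr rfl fun j hj => hfac (mem_Ioi.1 hj)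
  have hQlow : (∏ i : Fin n, ∏ _j ∈ Ioi i, (1 / 2 : ℝ)) *
      ∏ i : Fin n, ∏ j ∈ Ioi i, (2 * t * (1 + (u i - u j) * (y i - y j))) ≤
      ∏ i : Fin n, ∏ j ∈ Ioi i, (t + (x i - x j) * (y i - y j)) := by
    simp only [← prod_mul_distrib]
    have h0 {i j : Fin n} (hij : i < j) :
        0 ≤ 1 / 2 * (2 * t * (1 + (u i - u j) * (y i - y j))) := by
      have := hpos hij
      positivity
    refine prod_le_prod (fun i _ => prod_nonneg fun j hj => h0 (mem_Ioi.1 hj)) fun i _ =>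
      prod_le_prod (fun j hj => h0 (mem_Ioi.1 hj)) fun j hj => ?_
    rw [hxy]
    nlinarith [mul_nonneg ht.le (hpos (mem_Ioi.1 hj))]
  have hadd {i j : Fin n} (hij : i < j) : 0 ≤ t + (x i - x j) * (y i - y j) := by
    have := hpos hij
    rw [hxy]
    positivity
  have hQnn : 0 ≤ ∏ i : Fin n, ∏ j ∈ Ioi i, (t + (x i - x j) * (y i - y j)) :=
    prod_nonneg fun i _ => prod_nonneg fun j hj => hadd (mem_Ioi.1 hj)
  have hQupp : ∏ i : Fin n, ∏ j ∈ Ioi i, (t + (x i - x j) * (y i - y j)) ≤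
      ∏ i : Fin n, ∏ j ∈ Ioi i, (2 * t * (1 + (u i - u j) * (y i - y j))) := by
    refine prod_le_prod (fun i _ => prod_nonneg fun j hj => hadd (mem_Ioi.1 hj)) fun i _ =>
      prod_le_prod (fun j hj => hadd (mem_Ioi.1 hj)) fun j hj => ?_
    rw [hxy]
    linarith
  obtain ⟨hlow, hupp⟩ := h u y hu hy
  have hP := pairProd_nonneg hu hy
  rw [hsum, hexp, hprod]
  set Q := ∏ i : Fin n, ∏ j ∈ Ioi i, (t + (x i - x j) * (y i - y j))
  set H := ∏ i : Fin n, ∏ _j ∈ Ioi i, (1 / 2 : ℝ)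
  set B := ∏ i : Fin n, ∏ j ∈ Ioi i, (2 * t * (1 + (u i - u j) * (y i - y j)))
  set E := Real.exp (-((∑ k, x k ^ 2) + ∑ k, y k ^ 2) / (4 * t))
  set F := Real.exp (∑ k, u k * y k)
  have hE : 0 ≤ E := (Real.exp_pos _).le
  have hF : 0 ≤ F := (Real.exp_pos _).le
  constructor
  · calc _ = E * (C₁ * (F * pairProd u y)) * (H * B) := by ring
      _ ≤ E * (C₁ * (F * pairProd u y)) * Q := by gcongr
      _ ≤ _ := by gcongr
  · calc _ ≤ E * (C₂ * (F * pairProd u y)) * Q := by gcongr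
      _ ≤ E * (C₂ * (F * pairProd u y)) * B := by gcongr
      _ = _ := by ring
end

section
/- For every n ≥ 1 there exist constants C₁, C₂ > 0 depending only on n such that for all t > 0 and all weakly decreasing x, y ∈ ℝⁿ one has C₁·E ≤ e^{−(|x|²+|y|²)/(4t)}·(∑_{σ∈Sₙ} sgn(σ)·exp((1/(2t))·∑_{k=1}^n x_{σ(k)} y_k))·∏_{1≤i<j≤n}(t+(x_i−x_j)(y_i−y_j)) ≤ C₂·E, where now E = (∏_{1≤i<j≤n} sinh(x_i−x_j)·sinh(y_i−y_j))·e^{−ρ(x)−ρ(y)}·e^{−|x−y|²/(4t)}·∏_{1≤i<j≤n}(1+x_i−x_j)(1+y_i−y_j) and ρ(x) = ∑_{1≤i<j≤n}(x_i−x_j). (This is the sharp estimate of the radial heat kernel of the curved complex symmetric space of type A_{n−1}: p̃_t^W(x,y) ≍ e^{−|ρ|²t}·t^{−n/2}·e^{−ρ(x)−ρ(y)}·e^{−|x−y|²/(4t)}·∏_{i<j}(1+x_i−x_j)(1+y_i−y_j)/(t+(x_i−x_j)(y_i−y_j)).) -/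
open Finset

/-- `ρ(x) = ∑_{1 ≤ i < j ≤ n} (x_i − x_j)`. -/
def rhoSum {n : ℕ} (x : Fin n → ℝ) : ℝ :=
  ∑ i : Fin n, ∑ j ∈ Finset.Ioi i, (x i - x j)

/-- `ComparableWith C u v` says that each of `u`, `v` is at most `C` times the other. -/
structure ComparableWith (C u v : ℝ) : Prop where
  le : u ≤ C * v
  ge : v ≤ C * u

namespace ComparableWith

theorem symm {C u v : ℝ} (h : ComparableWith C u v) : ComparableWith C v u :=
  ⟨h.ge, h.le⟩

theorem trans {C D u v w : ℝ} (hC : 0 ≤ C) (hD : 0 ≤ D) (h : ComparableWith C u v)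
    (h' : ComparableWith D v w) : ComparableWith (C * D) u w where
  le := by
    calc u ≤ C * v := h.le
      _ ≤ C * (D * w) := by gcongr; exact h'.le
      _ = C * D * w := by ring
  ge := by
    calc w ≤ D * v := h'.ge
      _ ≤ D * (C * u) := by gcongr; exact h.ge
      _ = C * D * u := by ring

theorem mul {C D u v u' v' : ℝ} (hC : 0 ≤ C) (hu : 0 ≤ u) (hv : 0 ≤ v) (hu' : 0 ≤ u')
    (hv' : 0 ≤ v') (h : ComparableWith C u v) (h' : ComparableWith D u' v') :
    ComparableWith (C * D) (u * u') (v * v') where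
  le := by
    calc u * u' ≤ (C * v) * (D * v') := mul_le_mul h.le h'.le hu' (by positivity)
      _ = C * D * (v * v') := by ring
  ge := by
    calc v * v' ≤ (C * u) * (D * u') := mul_le_mul h.ge h'.ge hv' (by positivity)
      _ = C * D * (u * u') := by ring

theorem mul_left {C u v k : ℝ} (hk : 0 ≤ k) (h : ComparableWith C u v) :
    ComparableWith C (k * u) (k * v) where
  le := by
    calc k * u ≤ k * (C * v) := by gcongr; exact h.le
      _ = C * (k * v) := by ring
  ge := by
    calc k * v ≤ k * (C * u) := by gcongr; exact h.ge
      _ = C * (k * u) := by ring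

theorem of_mul_left {C u v k : ℝ} (hk : 0 < k) (h : ComparableWith C (k * u) (k * v)) :
    ComparableWith C u v where
  le := le_of_mul_le_mul_left (h.le.trans_eq (by ring)) hk
  ge := le_of_mul_le_mul_left (h.ge.trans_eq (by ring)) hk

theorem prod {ι : Type*} {s : Finset ι} {C u v : ι → ℝ} (hu : ∀ i ∈ s, 0 ≤ u i)
    (hv : ∀ i ∈ s, 0 ≤ v i) (h : ∀ i ∈ s, ComparableWith (C i) (u i) (v i)) :
    ComparableWith (∏ i ∈ s, C i) (∏ i ∈ s, u i) (∏ i ∈ s, v i) where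
  le := by
    rw [← prod_mul_distrib]
    exact prod_le_prod hu fun i hi => (h i hi).le
  ge := by
    rw [← prod_mul_distrib]
    exact prod_le_prod hv fun i hi => (h i hi).ge

end ComparableWith

/-- The length `u` truncated at scale `1 / v`, that is `u / (1 + u v)`. -/
noncomputable def truncLength (u v : ℝ) : ℝ := u / (1 + u * v)

theorem truncLength_nonneg {u v : ℝ} (hu : 0 ≤ u) (hv : 0 ≤ v) : 0 ≤ truncLength u v := by
  unfold truncLength; positivity

theorem truncLength_pos {u v : ℝ} (hu : 0 < u) (hv : 0 ≤ v) : 0 < truncLength u v := by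
  unfold truncLength; positivity

theorem truncLength_le {u v : ℝ} (hu : 0 ≤ u) (hv : 0 ≤ v) : truncLength u v ≤ u :=
  div_le_self hu (by nlinarith [mul_nonneg hu hv])

theorem truncLength_mul_le_one {u v : ℝ} (hu : 0 ≤ u) (hv : 0 ≤ v) : truncLength u v * v ≤ 1 := by
  have := mul_nonneg hu hv
  rw [truncLength, div_mul_eq_mul_div, div_le_one (by positivity)]
  linarith

theorem truncLength_mono {u u' v : ℝ} (hu : 0 ≤ u) (hv : 0 ≤ v) (h : u ≤ u') :
    truncLength u v ≤ truncLength u' v := by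
  have hu' := hu.trans h
  rw [truncLength, truncLength, div_le_div_iff₀ (by positivity) (by positivity)]
  nlinarith

theorem truncLength_mul_le {u v k : ℝ} (hu : 0 ≤ u) (hv : 0 ≤ v) (hk : 1 ≤ k) :
    truncLength (k * u) v ≤ k * truncLength u v := by
  have hk0 : 0 ≤ k := by linarith
  rw [truncLength, truncLength, ← mul_div_assoc]
  gcongr
  nlinarith

theorem comparableWith_truncLength_exchange {l L p c : ℝ} (hl : 0 ≤ l) (hL : 0 ≤ L) (hp : 0 ≤ p)
    (hc : 0 ≤ c) :
    ComparableWith 6 (truncLength l (p + c) * truncLength (l + truncLength L c) p)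
      (truncLength l p * truncLength (l + L) (p + c)) := by
  have key : truncLength (l + truncLength L c) p =
      (l + L + c * l * L) / (1 + c * L + p * (l + L + c * l * L)) := by
    have h1 : 1 + L * c ≠ 0 := by positivity
    have h2 : 1 + (l + L / (1 + L * c)) * p ≠ 0 := by positivity
    have h3 : 1 + c * L + p * (l + L + c * l * L) ≠ 0 := by positivity
    unfold truncLength
    rw [div_eq_div_iff h2 h3]
    field_simp
    ring
  rw [key]
  unfold truncLength
  constructor <;>
  · rw [div_mul_div_comm, div_mul_div_comm, ← mul_div_assoc,
      div_le_div_iff₀ (by positivity) (by positivity), ← sub_nonneg]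
    ring_nf
    positivity

theorem Fin.prod_Ioi_castSucc_eq {n : ℕ} (i : Fin n) (f : Fin (n + 1) → ℝ) :
    ∏ j ∈ Ioi i.castSucc, f j = (∏ j ∈ Ioi i, f j.castSucc) * f (Fin.last n) := by
  have h : Ioi i.castSucc = insert (Fin.last n) ((Ioi i).map Fin.castSuccEmb) := by
    rw [Fin.map_castSuccEmb_Ioi]
    ext j
    simp only [mem_Ioi, mem_insert, mem_Ioo]
    constructor
    · intro hj
      rcases eq_or_ne j (Fin.last n) with h | h
      · exact Or.inl h
      · exact Or.inr ⟨hj, Fin.lt_last_iff_ne_last.2 h⟩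
    · rintro (rfl | h)
      · exact Fin.castSucc_lt_last i
      · exact h.1
  rw [h, prod_insert (by simp [Fin.map_castSuccEmb_Ioi]), prod_map, mul_comm]
  rfl

theorem Fin.prod_Ioi_succ_mul {n : ℕ} (i : Fin n) (f : Fin (n + 1) → ℝ) :
    f i.succ * ∏ j ∈ Ioi i, f j.succ = (∏ j ∈ Ioi i, f j.castSucc) * f (Fin.last n) := by
  rw [← Fin.prod_Ioi_castSucc_eq, ← prod_insert (s := Ioi i) (f := fun j => f j.succ) (by simp),
    Ioi_insert, ← Fin.prod_Ici_succ]
  refine prod_congr ?_ fun _ _ => rfl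
  ext j
  simp [Fin.castSucc_lt_iff_succ_le]

/-- Row by row, the estimate of the integral over interlacing sequences reduces to the product
of the truncated gaps. -/
theorem comparableWith_prod_truncLength {n : ℕ} {a b : Fin (n + 1) → ℝ} (ha : StrictAnti a)
    (hb : Antitone b) (i : Fin n) :
    ComparableWith (∏ _j ∈ Ioi i, 6)
      (truncLength (a i.castSucc - a i.succ) (b i.castSucc - b (Fin.last n)) *
        ∏ j ∈ Ioi i, truncLength (a i.castSucc - a j.castSucc +
          truncLength (a j.castSucc - a j.succ) (b j.castSucc - b (Fin.last n)))
            (b i.castSucc - b j.castSucc))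
      (∏ j ∈ Ioi i.castSucc, truncLength (a i.castSucc - a j) (b i.castSucc - b j)) := by
  set G : Fin (n + 1) → ℝ :=
    fun j => truncLength (a i.castSucc - a j) (b i.castSucc - b (Fin.last n)) with hG
  have hc : ∀ j : Fin n, 0 ≤ b j.castSucc - b (Fin.last n) := fun j =>
    sub_nonneg.2 (hb (Fin.le_last _))
  have hL : ∀ j : Fin n, 0 < a j.castSucc - a j.succ := fun j =>
    sub_pos.2 (ha Fin.castSucc_lt_succ)
  have hl : ∀ j ∈ Ioi i, 0 < a i.castSucc - a j.castSucc := fun j hj =>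
    sub_pos.2 (ha (Fin.castSucc_lt_castSucc_iff.2 (mem_Ioi.1 hj)))
  have hp : ∀ j ∈ Ioi i, 0 ≤ b i.castSucc - b j.castSucc := fun j hj =>
    sub_nonneg.2 (hb (Fin.castSucc_le_castSucc_iff.2 (mem_Ioi.1 hj).le))
  have hGpos : 0 < ∏ j ∈ Ioi i, G j.castSucc :=
    prod_pos fun j hj => truncLength_pos (hl j hj) (hc i)
  refine ComparableWith.of_mul_left hGpos ?_
  have hG' : ∀ j ∈ Ioi i, 0 ≤ G j.succ := fun j hj =>
    truncLength_nonneg (by linarith [hl j hj, hL j]) (hc i)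
  have hX : ∀ j ∈ Ioi i, 0 ≤ truncLength (a i.castSucc - a j.castSucc +
      truncLength (a j.castSucc - a j.succ) (b j.castSucc - b (Fin.last n)))
            (b i.castSucc - b j.castSucc) := fun j hj =>
    truncLength_nonneg (add_nonneg (hl j hj).le (truncLength_nonneg (hL j).le (hc j))) (hp j hj)
  have h := (ComparableWith.prod (s := Ioi i) (C := fun _ => (6 : ℝ))
    (u := fun j => G j.castSucc * truncLength (a i.castSucc - a j.castSucc +
      truncLength (a j.castSucc - a j.succ) (b j.castSucc - b (Fin.last n)))
            (b i.castSucc - b j.castSucc))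
    (v := fun j => truncLength (a i.castSucc - a j.castSucc) (b i.castSucc - b j.castSucc) *
      G j.succ)
    (fun j hj => mul_nonneg (truncLength_nonneg (hl j hj).le (hc i)) (hX j hj))
    (fun j hj => mul_nonneg (truncLength_nonneg (hl j hj).le (hp j hj)) (hG' j hj))
    (fun j hj => by
      have h := comparableWith_truncLength_exchange (hl j hj).le (hL j).le (hp j hj) (hc j)
      rwa [sub_add_sub_cancel, sub_add_sub_cancel] at h)).mul_left
    (truncLength_nonneg (hL i).le (hc i))
  rw [prod_mul_distrib, prod_mul_distrib] at h
  convert h using 1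
  · ring
  · rw [Fin.prod_Ioi_castSucc_eq]
    have := Fin.prod_Ioi_succ_mul i G
    simp only [hG] at this ⊢
    linear_combination (-∏ j ∈ Ioi i, truncLength (a i.castSucc - a j.castSucc)
      (b i.castSucc - b j.castSucc)) * this

open MeasureTheory in
theorem mul_integral_exp_mul {a a' : ℝ} (h : a' ≤ a) (c : ℝ) :
    c * ∫ s in Set.Icc a' a, Real.exp (s * c) = Real.exp (a * c) - Real.exp (a' * c) := by
  have hd : ∀ s : ℝ, HasDerivAt (fun s => Real.exp (s * c)) (c * Real.exp (s * c)) s := by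
    intro s
    simpa [mul_comm] using ((hasDerivAt_id s).mul_const c).exp
  rw [integral_Icc_eq_integral_Ioc, ← intervalIntegral.integral_of_le h,
    ← intervalIntegral.integral_const_mul,
    intervalIntegral.integral_eq_sub_of_hasDerivAt (fun s _ => hd s)
      (Continuous.intervalIntegrable (by fun_prop) _ _)]

open MeasureTheory in
/-- Subtracting consecutive rows of `exp (aᵢ bⱼ)` and writing the differences as integrals gives a
recursion over sequences `s` interlacing with `a`. -/
theorem det_exp_succ {n : ℕ} {a : Fin (n + 1) → ℝ} (ha : Antitone a) (b : Fin (n + 1) → ℝ) :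
    (Matrix.of fun i j => Real.exp (a i * b j)).det =
      Real.exp (∑ i, a i * b (Fin.last n)) * (∏ j : Fin n, (b j.castSucc - b (Fin.last n))) *
      ∫ s in Set.Icc (fun i : Fin n => a i.succ) (fun i : Fin n => a i.castSucc),
        (Matrix.of fun i j => Real.exp (s i * (b j.castSucc - b (Fin.last n)))).det := by
  set c : Fin n → ℝ := fun j => b j.castSucc - b (Fin.last n) with hc
  have hinterl : ∀ i j : Fin n, Real.exp (a i.castSucc * c j) - Real.exp (a i.succ * c j) =
      c j * ∫ s in Set.Icc (a i.succ) (a i.castSucc), Real.exp (s * c j) :=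
    fun i j => (mul_integral_exp_mul (ha Fin.castSucc_lt_succ.le) (c j)).symm
  have hbox : (volume : Measure (Fin n → ℝ)).restrict
      (Set.Icc (fun i : Fin n => a i.succ) (fun i : Fin n => a i.castSucc)) =
      Measure.pi fun i : Fin n => volume.restrict (Set.Icc (a i.succ) (a i.castSucc)) := by
    rw [← Set.pi_univ_Icc, volume_pi, Measure.restrict_pi_pi]
  have hdet : ∫ s in Set.Icc (fun i : Fin n => a i.succ) (fun i : Fin n => a i.castSucc),
        (Matrix.of fun i j => Real.exp (s i * c j)).det =
      (Matrix.of fun i j : Fin n =>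
        ∫ s in Set.Icc (a i.succ) (a i.castSucc), Real.exp (s * c j)).det := by
    rw [hbox, ← Matrix.det_transpose, Matrix.det_apply']
    simp_rw [← Matrix.det_transpose (Matrix.of fun i j => Real.exp (_ * c j)), Matrix.det_apply',
      Matrix.transpose_apply, Matrix.of_apply]
    rw [integral_finsetSum]
    · refine sum_congr rfl fun σ _ => ?_
      rw [integral_const_mul, integral_fintype_prod_eq_prod (fun i s => Real.exp (s * c (σ i)))]
    · intro σ _
      refine Integrable.const_mul ?_ _
      refine Integrable.fintype_prod (f := fun i s => Real.exp (s * c (σ i))) fun i => ?_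
      exact Continuous.integrableOn_Icc (by fun_prop)
  have hshift : (Matrix.of fun i j => Real.exp (a i * b j)).det =
      Real.exp (∑ i, a i * b (Fin.last n)) *
        (Matrix.of fun i j => Real.exp (a i * (b j - b (Fin.last n)))).det := by
    rw [Real.exp_sum, ← Matrix.det_mul_column]
    congr 1
    ext i j
    simp only [Matrix.of_apply, ← Real.exp_add]
    ring_nf
  have hrows : (Matrix.of fun i j => Real.exp (a i * (b j - b (Fin.last n)))).det =
      (Matrix.of fun i j : Fin n =>
        Real.exp (a i.castSucc * c j) - Real.exp (a i.succ * c j)).det := by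
    set B : Matrix (Fin (n + 1)) (Fin (n + 1)) ℝ := Matrix.of fun i j =>
      Fin.cases (Real.exp (a 0 * (b j - b (Fin.last n))))
        (fun k => Real.exp (a k.succ * (b j - b (Fin.last n))) -
          Real.exp (a k.castSucc * (b j - b (Fin.last n)))) i with hB
    rw [Matrix.det_eq_of_forall_row_eq_smul_add_pred (B := B) (fun _ => 1)
      (fun j => by simp [hB]) (fun i j => by simp [hB]), Matrix.det_succ_column B (Fin.last n),
      Fin.sum_univ_succ]
    have hneg : B.submatrix (Fin.succAbove 0) (Fin.last n).succAbove =
        -(Matrix.of fun i j : Fin n =>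
        Real.exp (a i.castSucc * c j) - Real.exp (a i.succ * c j)) := by
      ext i j
      simp [hB, hc]
    rw [hneg, Matrix.det_neg]
    simp [hB, ← mul_assoc, ← mul_pow]
  rw [hshift, hrows, hdet, mul_assoc, ← Matrix.det_mul_row]
  congr 3
  ext i j
  exact hinterl i j

theorem ComparableWith.of_le_of_le {A B u v : ℝ} (hA : 0 ≤ A) (hB : 0 ≤ B) (hu : 0 ≤ u) (hv : 0 ≤ v)
    (h : u ≤ A * v) (h' : v ≤ B * u) : ComparableWith (A + B) u v where
  le := by nlinarith [mul_nonneg hB hv]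
  ge := by nlinarith [mul_nonneg hA hu]

theorem one_add_div_truncLength_pow_le {L c w : ℝ} (hL : 0 < L) (hc : 0 ≤ c) (hw : 0 ≤ w)
    (hwL : w ≤ L) (n : ℕ) :
    (1 + w / truncLength L c) ^ n ≤ 2 ^ n * n.factorial * Real.exp 1 * Real.exp (w * c / 2) := by
  have hz : 0 ≤ w * c := mul_nonneg hw hc
  have h1 : 1 + w / truncLength L c ≤ 2 * (1 + w * c / 2) := by
    have : w / truncLength L c = w / L + w * c := by
      unfold truncLength
      field_simp
    have : w / L ≤ 1 := (div_le_one hL).2 hwL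
    linarith
  have h0 : 0 ≤ w / truncLength L c := div_nonneg hw (truncLength_nonneg hL.le hc)
  calc (1 + w / truncLength L c) ^ n ≤ (2 * (1 + w * c / 2)) ^ n := by gcongr
    _ = 2 ^ n * n.factorial * ((1 + w * c / 2) ^ n / n.factorial) := by
      rw [mul_pow]
      field_simp
    _ ≤ 2 ^ n * n.factorial * Real.exp (1 + w * c / 2) := by
      gcongr
      exact Real.pow_div_factorial_le_exp _ (by positivity) n
    _ = _ := by rw [Real.exp_add]; ring

open MeasureTheory in
theorem integral_exp_mul_half_le {a a' c : ℝ} (h : a' < a) (hc : 0 ≤ c) :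
    ∫ s in Set.Icc a' a, Real.exp (s * (c / 2)) ≤
      3 * (Real.exp (a * (c / 2)) * truncLength (a - a') c) := by
  set J := ∫ s in Set.Icc a' a, Real.exp (s * (c / 2)) with hJ
  have hcJ : c / 2 * J = Real.exp (a * (c / 2)) - Real.exp (a' * (c / 2)) :=
    mul_integral_exp_mul h.le _
  have hJL : J ≤ Real.exp (a * (c / 2)) * (a - a') := by
    have : J ≤ ∫ _s in Set.Icc a' a, Real.exp (a * (c / 2)) := by
      refine setIntegral_mono_on (Continuous.integrableOn_Icc (by fun_prop))
        (Continuous.integrableOn_Icc (by fun_prop)) measurableSet_Icc fun s hs => ?_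
      have := hs.2
      gcongr
    refine this.trans_eq ?_
    rw [setIntegral_const, smul_eq_mul, mul_comm, Real.volume_real_Icc_of_le h.le]
  have hL : 0 < a - a' := sub_pos.2 h
  rw [truncLength, ← mul_div_assoc, ← mul_div_assoc, le_div_iff₀ (by positivity)]
  have hsplit : J * (1 + (a - a') * c) = J + 2 * (a - a') * (c / 2 * J) := by ring
  rw [hsplit, hcJ]
  nlinarith [mul_pos hL (Real.exp_pos (a' * (c / 2)))]

open MeasureTheory in
theorem integral_exp_mul_one_add_div_pow_le {a a' c : ℝ} (h : a' < a) (hc : 0 ≤ c) (n : ℕ) :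
    ∫ s in Set.Icc a' a, Real.exp (s * c) * (1 + (a - s) / truncLength (a - a') c) ^ n ≤
      2 ^ n * n.factorial * Real.exp 1 * 3 * (Real.exp (a * c) * truncLength (a - a') c) := by
  calc ∫ s in Set.Icc a' a, Real.exp (s * c) * (1 + (a - s) / truncLength (a - a') c) ^ n
      ≤ ∫ s in Set.Icc a' a, 2 ^ n * n.factorial * Real.exp 1 * Real.exp (a * (c / 2)) *
          Real.exp (s * (c / 2)) := by
        refine setIntegral_mono_on (Continuous.integrableOn_Icc (by fun_prop))
          (Continuous.integrableOn_Icc (by fun_prop)) measurableSet_Icc fun s hs => ?_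
        refine (mul_le_mul_of_nonneg_left (one_add_div_truncLength_pow_le (sub_pos.2 h) hc
          (sub_nonneg.2 hs.2) (by linarith [hs.1]) n) (Real.exp_pos _).le).trans_eq ?_
        have : Real.exp (s * c) * Real.exp ((a - s) * c / 2) =
            Real.exp (a * (c / 2)) * Real.exp (s * (c / 2)) := by
          rw [← Real.exp_add, ← Real.exp_add]
          ring_nf
        linear_combination (2 ^ n * n.factorial * Real.exp 1) * this
    _ = 2 ^ n * n.factorial * Real.exp 1 * Real.exp (a * (c / 2)) *
          ∫ s in Set.Icc a' a, Real.exp (s * (c / 2)) := integral_const_mul _ _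
    _ ≤ 2 ^ n * n.factorial * Real.exp 1 * Real.exp (a * (c / 2)) *
          (3 * (Real.exp (a * (c / 2)) * truncLength (a - a') c)) := by
        gcongr
        exact integral_exp_mul_half_le h hc
    _ = _ := by
        have : Real.exp (a * c) = Real.exp (a * (c / 2)) * Real.exp (a * (c / 2)) := by
          rw [← Real.exp_add]
          ring_nf
        rw [this]
        ring

open MeasureTheory in
/-- Estimate of an integral over the sequences interlacing with `a`. -/
theorem comparableWith_integral_interlacing (n : ℕ) {C : ℝ} (hC : 0 < C) :
    ∃ C' : ℝ, 0 < C' ∧ ∀ (a : Fin (n + 1) → ℝ) (c : Fin n → ℝ) (W : ℝ) (g : (Fin n → ℝ) → ℝ),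
      StrictAnti a → Antitone c → (∀ i, 0 ≤ c i) → 0 ≤ W → Continuous g →
      (∀ s, Antitone s → ComparableWith C (g s) (W * (Real.exp (∑ i, s i * c i) *
        ∏ i, ∏ j ∈ Ioi i, truncLength (s i - s j) (c i - c j)))) →
      ComparableWith C'
        (∫ s in Set.Icc (fun i : Fin n => a i.succ) (fun i : Fin n => a i.castSucc), g s)
        (W * (Real.exp (∑ i, a i.castSucc * c i) *
          ((∏ i, truncLength (a i.castSucc - a i.succ) (c i)) *
          ∏ i, ∏ j ∈ Ioi i, truncLength (a i.castSucc - a j.castSucc +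
            truncLength (a j.castSucc - a j.succ) (c j)) (c i - c j)))) := by
  set A : ℝ := ∏ _i : Fin n, 2 ^ n * n.factorial * Real.exp 1 * 3 with hA
  set B : ℝ := (∏ _i : Fin n, Real.exp (1 / 2) * 4) * ∏ i : Fin n, ∏ _j ∈ Ioi i, 4 with hB
  have hA0 : 0 < A := prod_pos fun i _ => by positivity
  have hB0 : 0 < B := by positivity
  refine ⟨C * A + C * B, by positivity, fun a c W g ha hc hc0 hW hg hcmp => ?_⟩
  set m : Fin n → ℝ := fun i => truncLength (a i.castSucc - a i.succ) (c i) with hm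
  set Q : ℝ := ∏ i, ∏ j ∈ Ioi i,
    truncLength (a i.castSucc - a j.castSucc + m j) (c i - c j) with hQ
  set box := Set.Icc (fun i : Fin n => a i.succ) (fun i : Fin n => a i.castSucc) with hbox
  have hL : ∀ j : Fin n, 0 < a j.castSucc - a j.succ := fun j =>
    sub_pos.2 (ha Fin.castSucc_lt_succ)
  have hm0 : ∀ i, 0 < m i := fun i => truncLength_pos (hL i) (hc0 i)
  have hmL : ∀ i, m i ≤ a i.castSucc - a i.succ := fun i => truncLength_le (hL i).le (hc0 i)
  have hmc : ∀ i, m i * c i ≤ 1 := fun i => truncLength_mul_le_one (hL i).le (hc0 i)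
  have hl : ∀ i : Fin n, ∀ j ∈ Ioi i, a i.castSucc - a i.succ ≤ a i.castSucc - a j.castSucc :=
    fun (i j : Fin n) hj => sub_le_sub_left (ha.antitone
      (Fin.succ_le_castSucc_iff.2 (mem_Ioi.1 hj))) _
  have hp : ∀ i, ∀ j ∈ Ioi i, 0 ≤ c i - c j := fun i j hj =>
    sub_nonneg.2 (hc (mem_Ioi.1 hj).le)
  have hanti : ∀ s ∈ box, Antitone s := by
    intro s hs i j hij
    rcases hij.eq_or_lt with rfl | hij
    · rfl
    · exact (hs.2 j).trans ((ha.antitone (Fin.succ_le_castSucc_iff.2 hij)).trans (hs.1 i))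
  have hs0 : ∀ s ∈ box, ∀ i, ∀ j ∈ Ioi i, 0 ≤ s i - s j := fun s hs i j hj =>
    sub_nonneg.2 (hanti s hs (mem_Ioi.1 hj).le)
  have hg0 : ∀ s ∈ box, 0 ≤ g s := by
    intro s hs
    have h1 := (hcmp s (hanti s hs)).ge
    have h2 : 0 ≤ W * (Real.exp (∑ i, s i * c i) *
        ∏ i, ∏ j ∈ Ioi i, truncLength (s i - s j) (c i - c j)) :=
      mul_nonneg hW (mul_nonneg (Real.exp_pos _).le (prod_nonneg fun i _ => prod_nonneg fun j hj =>
        truncLength_nonneg (hs0 s hs i j hj) (hp i j hj)))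
    exact nonneg_of_mul_nonneg_right (h2.trans h1) hC
  have hgint : IntegrableOn g box := hg.integrableOn_Icc
  have hQ0 : 0 ≤ Q := prod_nonneg fun i _ => prod_nonneg fun j hj =>
    truncLength_nonneg (by linarith [hl i j hj, hL i, hm0 j]) (hp i j hj)
  have hM0 : 0 ≤ ∏ i, m i := prod_nonneg fun i _ => (hm0 i).le
  refine ComparableWith.of_le_of_le (by positivity) (by positivity)
    (setIntegral_nonneg measurableSet_Icc hg0) (by positivity) ?_ ?_
  · have hpt : ∀ s ∈ box, g s ≤ C * W * Q *
        ∏ i, (Real.exp (s i * c i) * (1 + (a i.castSucc - s i) / m i) ^ n) := by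
      intro s hs
      have hw : ∀ i, 0 ≤ (a i.castSucc - s i) / m i := fun i =>
        div_nonneg (sub_nonneg.2 (hs.2 i)) (hm0 i).le
      have hprod : ∏ i, ∏ j ∈ Ioi i, truncLength (s i - s j) (c i - c j) ≤
          Q * ∏ i, (1 + (a i.castSucc - s i) / m i) ^ n := by
        calc ∏ i, ∏ j ∈ Ioi i, truncLength (s i - s j) (c i - c j)
            ≤ ∏ i, ∏ j ∈ Ioi i, (truncLength (a i.castSucc - a j.castSucc + m j) (c i - c j) *
                (1 + (a j.castSucc - s j) / m j)) := by
              refine prod_le_prod (fun i _ => prod_nonneg fun j hj =>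
                truncLength_nonneg (hs0 s hs i j hj) (hp i j hj)) fun i _ =>
                prod_le_prod (fun j hj => truncLength_nonneg (hs0 s hs i j hj) (hp i j hj))
                fun j hj => ?_
              have hpos : 0 ≤ a i.castSucc - a j.castSucc := by linarith [hl i j hj, hL i]
              refine (truncLength_mono (hs0 s hs i j hj) (hp i j hj) ?_).trans
                ((truncLength_mul_le (k := 1 + (a j.castSucc - s j) / m j)
                  (add_nonneg hpos (hm0 j).le) (hp i j hj) (by linarith [hw j])).trans_eq
                  (mul_comm _ _))
              have h1 : (a j.castSucc - s j) / m j * m j = a j.castSucc - s j :=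
                div_mul_cancel₀ _ (hm0 j).ne'
              have h2 : s i ≤ a i.castSucc := hs.2 i
              nlinarith [mul_nonneg (hw j) hpos, hm0 j]
          _ = Q * ∏ i : Fin n, ∏ j ∈ Ioi i, (1 + (a j.castSucc - s j) / m j) := by
              simp_rw [prod_mul_distrib]
              rfl
          _ ≤ Q * ∏ _i : Fin n, ∏ j, (1 + (a j.castSucc - s j) / m j) := by
              refine mul_le_mul_of_nonneg_left (prod_le_prod (fun i _ => prod_nonneg fun j _ =>
                by linarith [hw j]) fun i _ => ?_) hQ0
              exact prod_le_prod_of_subset_of_one_le (subset_univ _)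
                (fun j _ => by linarith [hw j]) fun j _ _ => by linarith [hw j]
          _ = _ := by rw [prod_const, card_univ, Fintype.card_fin, prod_pow]
      calc g s ≤ C * (W * (Real.exp (∑ i, s i * c i) *
            ∏ i, ∏ j ∈ Ioi i, truncLength (s i - s j) (c i - c j))) := (hcmp s (hanti s hs)).le
        _ ≤ C * (W * (Real.exp (∑ i, s i * c i) *
            (Q * ∏ i, (1 + (a i.castSucc - s i) / m i) ^ n))) := by gcongr
        _ = _ := by
          rw [prod_mul_distrib, Real.exp_sum]
          ring
    calc ∫ s in box, g s ≤ ∫ s in box, C * W * Q *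
        ∏ i, (Real.exp (s i * c i) * (1 + (a i.castSucc - s i) / m i) ^ n) :=
          setIntegral_mono_on hgint (Continuous.integrableOn_Icc (by fun_prop))
            measurableSet_Icc hpt
      _ = C * W * Q * ∏ i, ∫ s in Set.Icc (a i.succ) (a i.castSucc),
          Real.exp (s * c i) * (1 + (a i.castSucc - s) / m i) ^ n := by
        rw [integral_const_mul, hbox, ← Set.pi_univ_Icc, volume_pi, Measure.restrict_pi_pi,
          integral_fintype_prod_eq_prod
            (fun i s => Real.exp (s * c i) * (1 + (a i.castSucc - s) / m i) ^ n)]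
      _ ≤ C * W * Q * ∏ i, (2 ^ n * n.factorial * Real.exp 1 * 3 *
          (Real.exp (a i.castSucc * c i) * m i)) := by
        gcongr with i
        · intro i _
          refine setIntegral_nonneg measurableSet_Icc fun s hs => ?_
          have : 0 ≤ (a i.castSucc - s) / m i := div_nonneg (sub_nonneg.2 hs.2) (hm0 i).le
          positivity
        · exact integral_exp_mul_one_add_div_pow_le (ha Fin.castSucc_lt_succ) (hc0 i) n
      _ = _ := by
        rw [prod_mul_distrib, ← hA, prod_mul_distrib, Real.exp_sum]
        ring
  · set sub := Set.Icc (fun i => a i.castSucc - m i / 2) (fun i => a i.castSucc - m i / 4)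
      with hsub
    have hsubset : sub ⊆ box := Set.Icc_subset_Icc
      (fun i => by have := hmL i; have := hm0 i; dsimp only; linarith)
      (fun i => by have := hm0 i; dsimp only; linarith)
    have hpt : ∀ s ∈ sub, C⁻¹ * (W * ((∏ i, Real.exp (a i.castSucc * c i - 1 / 2)) *
        ∏ i, ∏ j ∈ Ioi i, (truncLength (a i.castSucc - a j.castSucc + m j) (c i - c j) / 4))) ≤
        g s := by
      intro s hs
      have hsb := hsubset hs
      rw [inv_mul_le_iff₀ hC]
      refine le_trans ?_ (hcmp s (hanti s hsb)).ge
      rw [Real.exp_sum]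
      have h4 : ∀ i : Fin n, ∀ j ∈ Ioi i, 0 ≤
          truncLength (a i.castSucc - a j.castSucc + m j) (c i - c j) / 4 := fun i j hj =>
        div_nonneg (truncLength_nonneg (by linarith [hl i j hj, hL i, hm0 j]) (hp i j hj))
          (by norm_num)
      refine mul_le_mul_of_nonneg_left (mul_le_mul (prod_le_prod (fun i _ => (Real.exp_pos _).le)
        fun i _ => Real.exp_le_exp.2 ?_) (prod_le_prod (fun i _ => prod_nonneg (h4 i)) fun i _ =>
        prod_le_prod (h4 i) fun j hj => ?_) (prod_nonneg fun i _ => prod_nonneg (h4 i))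
        (prod_nonneg fun i _ => (Real.exp_pos _).le)) hW
      · have h1 := hs.1 i
        dsimp only at h1
        nlinarith [mul_le_mul_of_nonneg_right h1 (hc0 i), hmc i]
      · have h1 := hs.1 i
        have h2 := hs.2 j
        dsimp only at h1 h2
        have h3 := hl i j hj
        have h5 := hmL i
        have h6 := hm0 j
        have h7 := hm0 i
        have := (truncLength_mono (by linarith [hL i]) (hp i j hj)
          (show a i.castSucc - a j.castSucc + m j ≤ 4 * (s i - s j) by linarith)).trans
          (truncLength_mul_le (hs0 s hsb i j hj) (hp i j hj) (by norm_num))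
        linarith
    have hvol : volume.real sub = ∏ i, (m i / 4) := by
      rw [measureReal_def, Real.volume_Icc_pi_toReal
        (fun i => by have := hm0 i; dsimp only; linarith)]
      exact prod_congr rfl fun i _ => by ring
    have hlow := (setIntegral_ge_of_const_le_real measurableSet_Icc
      isCompact_Icc.measure_ne_top hpt (hgint.mono_set hsubset)).trans
      (setIntegral_mono_set hgint
        ((ae_restrict_iff' measurableSet_Icc).2 (ae_of_all _ hg0)) hsubset.eventuallyLE)
    rw [hvol] at hlow
    refine le_of_eq_of_le ?_ (mul_le_mul_of_nonneg_left hlow (by positivity : 0 ≤ C * B))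
    simp_rw [Real.exp_sub, prod_div_distrib, hB, prod_mul_distrib, Real.exp_sum]
    have he : ∏ _i : Fin n, Real.exp (1 / 2) ≠ 0 := by positivity
    have h4 : ∏ _i : Fin n, (4 : ℝ) ≠ 0 := by positivity
    have h44 : ∏ i : Fin n, ∏ _j ∈ Ioi i, (4 : ℝ) ≠ 0 := by positivity
    rw [hQ]
    field_simp

theorem det_exp_eq_zero_and_prod_eq_zero {n : ℕ} {a b : Fin n → ℝ} (ha : Antitone a)
    (ha' : ¬ StrictAnti a) :
    (Matrix.of fun i j => Real.exp (a i * b j)).det = 0 ∧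
      ∏ i, ∏ j ∈ Ioi i, ((b i - b j) * truncLength (a i - a j) (b i - b j)) = 0 := by
  have hinj : ¬ Function.Injective a := fun h => ha' (ha.strictAnti_of_injective h)
  obtain ⟨i, j, hij, hlt⟩ : ∃ i j, a i = a j ∧ i < j := by
    simp only [Function.Injective, not_forall] at hinj
    obtain ⟨i, j, hij, hne⟩ := hinj
    rcases lt_or_gt_of_ne hne with h | h
    · exact ⟨i, j, hij, h⟩
    · exact ⟨j, i, hij.symm, h⟩
  refine ⟨Matrix.det_zero_of_row_eq hlt.ne (by ext k; simp [hij]), ?_⟩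
  exact prod_eq_zero (mem_univ i) (prod_eq_zero (mem_Ioi.2 hlt) (by simp [hij, truncLength]))

/-- Two-sided estimate of the alternating sum `∑ sgn σ exp (∑ a_{σ k} b_k)`. -/
theorem comparableWith_det_exp (n : ℕ) :
    ∃ C : ℝ, 0 < C ∧ ∀ a b : Fin n → ℝ, Antitone a → Antitone b →
      ComparableWith C (Matrix.of fun i j => Real.exp (a i * b j)).det
        (Real.exp (∑ i, a i * b i) *
          ∏ i, ∏ j ∈ Ioi i, ((b i - b j) * truncLength (a i - a j) (b i - b j))) := by
  induction n with
  | zero => exact ⟨1, one_pos, fun a b _ _ => by constructor <;> simp⟩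
  | succ n ih =>
    obtain ⟨C, hC, ih⟩ := ih
    obtain ⟨C', hC', hinterl⟩ := comparableWith_integral_interlacing n hC
    set D : ℝ := ∏ i : Fin n, ∏ _j ∈ Ioi i, 6 with hD
    have hD0 : 0 < D := by positivity
    refine ⟨C' * D, by positivity, fun a b ha hb => ?_⟩
    by_cases ha' : StrictAnti a
    swap
    · obtain ⟨h1, h2⟩ := det_exp_eq_zero_and_prod_eq_zero (b := b) ha ha'
      rw [h1, h2]
      constructor <;> simp
    set c : Fin n → ℝ := fun j => b j.castSucc - b (Fin.last n) with hc
    have hc0 : ∀ j, 0 ≤ c j := fun j => sub_nonneg.2 (hb (Fin.le_last _))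
    have hcanti : Antitone c := fun i j hij =>
      sub_le_sub_right (hb (Fin.castSucc_le_castSucc_iff.2 hij)) _
    have hcsub : ∀ i j, c i - c j = b i.castSucc - b j.castSucc := fun i j =>
      sub_sub_sub_cancel_right _ _ _
    have hp : ∀ i, ∀ j ∈ Ioi i, 0 ≤ c i - c j := fun i j hj =>
      sub_nonneg.2 (hcanti (mem_Ioi.1 hj).le)
    set W : ℝ := ∏ i, ∏ j ∈ Ioi i, (c i - c j) with hW
    have hW0 : 0 ≤ W := prod_nonneg fun i _ => prod_nonneg (hp i)
    have hI := hinterl a c W (fun s => (Matrix.of fun i j => Real.exp (s i * c j)).det) ha' hcanti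
      hc0 hW0 (Continuous.matrix_det (by fun_prop)) (fun s hs => by
        convert ih s c hs hcanti using 1
        simp_rw [prod_mul_distrib]
        ring)
    have hL : ∀ j : Fin n, 0 < a j.castSucc - a j.succ := fun j =>
      sub_pos.2 (ha' Fin.castSucc_lt_succ)
    have halg : ComparableWith D
        ((∏ i, truncLength (a i.castSucc - a i.succ) (c i)) *
          ∏ i, ∏ j ∈ Ioi i, truncLength (a i.castSucc - a j.castSucc +
            truncLength (a j.castSucc - a j.succ) (c j)) (c i - c j))
        (∏ i : Fin n, ∏ j ∈ Ioi i.castSucc,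
          truncLength (a i.castSucc - a j) (b i.castSucc - b j)) := by
      rw [← prod_mul_distrib]
      simp_rw [hcsub]
      refine ComparableWith.prod (fun i _ => ?_) (fun i _ => ?_)
        fun i _ => comparableWith_prod_truncLength ha' hb i
      · refine mul_nonneg (truncLength_nonneg (hL i).le (hc0 i)) (prod_nonneg fun j hj => ?_)
        refine truncLength_nonneg (add_nonneg (sub_nonneg.2 (ha ?_))
          (truncLength_nonneg (hL j).le (hc0 j))) (sub_nonneg.2 (hb ?_)) <;>
        exact Fin.castSucc_le_castSucc_iff.2 (mem_Ioi.1 hj).le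
      · exact prod_nonneg fun j hj => truncLength_nonneg (sub_nonneg.2 (ha (mem_Ioi.1 hj).le))
          (sub_nonneg.2 (hb (mem_Ioi.1 hj).le))
    have hall := (hI.trans hC'.le hD0.le
      ((halg.mul_left (Real.exp_pos (∑ i : Fin n, a i.castSucc * c i)).le).mul_left hW0)).mul_left
      (mul_nonneg (Real.exp_pos (∑ i, a i * b (Fin.last n))).le
        (prod_nonneg fun j (_ : j ∈ univ) => hc0 j))
    rw [← det_exp_succ ha b] at hall
    convert hall using 1
    have hexp : Real.exp (∑ i, a i * b i) = Real.exp (∑ i, a i * b (Fin.last n)) *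
        Real.exp (∑ i : Fin n, a i.castSucc * c i) := by
      rw [← Real.exp_add, Fin.sum_univ_castSucc, Fin.sum_univ_castSucc, add_right_comm,
        ← sum_add_distrib]
      simp only [hc]
      ring_nf
    have hgaps : ∏ i : Fin n, ∏ j ∈ Ioi i.castSucc, (b i.castSucc - b j) = W * ∏ i, c i := by
      rw [hW, ← prod_mul_distrib]
      refine prod_congr rfl fun i _ => ?_
      rw [Fin.prod_Ioi_castSucc_eq]
      simp_rw [hcsub]
      rfl
    rw [Fin.prod_univ_castSucc, ← Fin.top_eq_last, Ioi_top, prod_empty, mul_one, hexp]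
    simp_rw [prod_mul_distrib]
    rw [hgaps, Fin.top_eq_last]
    ring

theorem comparableWith_sinh_mul_exp_neg {u : ℝ} (hu : 0 ≤ u) :
    ComparableWith 2 (Real.sinh u * Real.exp (-u) * (1 + u)) u := by
  have h1 : Real.sinh u * Real.exp (-u) = (1 - Real.exp (-(2 * u))) / 2 := by
    rw [Real.sinh_eq, div_mul_eq_mul_div, sub_mul, ← Real.exp_add, ← Real.exp_add]
    ring_nf
    simp
  have h2 : 1 - 2 * u ≤ Real.exp (-(2 * u)) := by
    linarith [Real.add_one_le_exp (-(2 * u))]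
  have h3 := Real.exp_pos (-(2 * u))
  have h4 : Real.exp (-(2 * u)) * (1 + 2 * u) ≤ 1 := by
    rw [Real.exp_neg, inv_mul_le_iff₀ (Real.exp_pos _)]
    linarith [Real.add_one_le_exp (2 * u)]
  rw [h1]
  constructor <;> nlinarith

theorem comparableWith_truncLength_mul_add {t u v : ℝ} (ht : 0 < t) (hu : 0 ≤ u) (hv : 0 ≤ v) :
    ComparableWith 2 (v * truncLength (u / (2 * t)) v * (t + u * v)) (u * v) := by
  have huv := mul_nonneg hu hv
  have h : v * truncLength (u / (2 * t)) v * (t + u * v) =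
      u * v * ((t + u * v) / (2 * t + u * v)) := by
    unfold truncLength
    field_simp
  have h1 : (t + u * v) / (2 * t + u * v) ≤ 1 := (div_le_one (by positivity)).2 (by linarith)
  have h2 : 1 / 2 ≤ (t + u * v) / (2 * t + u * v) := by
    rw [div_le_div_iff₀ (by positivity) (by positivity)]
    linarith
  rw [h]
  constructor <;> nlinarith

theorem exp_neg_rhoSum {n : ℕ} (x : Fin n → ℝ) :
    Real.exp (-rhoSum x) = ∏ i, ∏ j ∈ Ioi i, Real.exp (-(x i - x j)) := by
  simp_rw [rhoSum, ← sum_neg_distrib, Real.exp_sum]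

/-- Sharp estimate for the radial heat kernel of the curved complex symmetric space of
type `A_{n-1}`: for `t > 0` and weakly decreasing `x, y`,
`e^{−(|x|²+|y|²)/(4t)} · (∑_σ sgn σ · e^{(1/(2t))∑ x_{σ(k)} y_k}) · ∏_{i<j}(t+(x_i−x_j)(y_i−y_j))`
is comparable with
`(∏_{i<j} sinh(x_i−x_j) sinh(y_i−y_j)) · e^{−ρ(x)−ρ(y)} · e^{−|x−y|²/(4t)} · ∏_{i<j}(1+x_i−x_j)(1+y_i−y_j)`,
with constants depending only on `n`. -/
theorem curved_heat_kernel_estimate_An (n : ℕ) (hn : 1 ≤ n) :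
    ∃ C₁ C₂ : ℝ, 0 < C₁ ∧ 0 < C₂ ∧
      ∀ t : ℝ, 0 < t → ∀ x y : Fin n → ℝ, Antitone x → Antitone y →
        C₁ * ((∏ i : Fin n, ∏ j ∈ Finset.Ioi i, Real.sinh (x i - x j) * Real.sinh (y i - y j)) *
              Real.exp (-rhoSum x - rhoSum y) *
              Real.exp (-(∑ k, (x k - y k) ^ 2) / (4 * t)) *
              ∏ i : Fin n, ∏ j ∈ Finset.Ioi i, (1 + x i - x j) * (1 + y i - y j)) ≤
            Real.exp (-((∑ k, x k ^ 2) + ∑ k, y k ^ 2) / (4 * t)) *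
              (∑ σ : Equiv.Perm (Fin n), ((Equiv.Perm.sign σ : ℤ) : ℝ) *
                Real.exp ((1 / (2 * t)) * ∑ k, x (σ k) * y k)) *
              (∏ i : Fin n, ∏ j ∈ Finset.Ioi i, (t + (x i - x j) * (y i - y j))) ∧
        Real.exp (-((∑ k, x k ^ 2) + ∑ k, y k ^ 2) / (4 * t)) *
              (∑ σ : Equiv.Perm (Fin n), ((Equiv.Perm.sign σ : ℤ) : ℝ) *
                Real.exp ((1 / (2 * t)) * ∑ k, x (σ k) * y k)) *
              (∏ i : Fin n, ∏ j ∈ Finset.Ioi i, (t + (x i - x j) * (y i - y j))) ≤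
          C₂ * ((∏ i : Fin n, ∏ j ∈ Finset.Ioi i, Real.sinh (x i - x j) * Real.sinh (y i - y j)) *
              Real.exp (-rhoSum x - rhoSum y) *
              Real.exp (-(∑ k, (x k - y k) ^ 2) / (4 * t)) *
              ∏ i : Fin n, ∏ j ∈ Finset.Ioi i, (1 + x i - x j) * (1 + y i - y j)) := by
  obtain ⟨C, hC, hdet⟩ := comparableWith_det_exp n
  set D : ℝ := ∏ i : Fin n, ∏ _j ∈ Ioi i, 2 * (2 * 2) with hD
  have hD0 : 0 < D := by positivity
  refine ⟨(C * D)⁻¹, C * D, by positivity, by positivity, fun t ht x y hx hy => ?_⟩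
  have hu : ∀ i, ∀ j ∈ Ioi i, 0 ≤ x i - x j := fun i j hj => sub_nonneg.2 (hx (mem_Ioi.1 hj).le)
  have hv : ∀ i, ∀ j ∈ Ioi i, 0 ≤ y i - y j := fun i j hj => sub_nonneg.2 (hy (mem_Ioi.1 hj).le)
  have hT0 : 0 ≤ ∏ i : Fin n, ∏ j ∈ Ioi i, (t + (x i - x j) * (y i - y j)) :=
    prod_nonneg fun i _ => prod_nonneg fun j hj => by
      have := mul_nonneg (hu i j hj) (hv i j hj)
      positivity
  have hfac : ComparableWith D
      (∏ i, ∏ j ∈ Ioi i, ((y i - y j) * truncLength ((x i - x j) / (2 * t)) (y i - y j) *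
        (t + (x i - x j) * (y i - y j))))
      (∏ i, ∏ j ∈ Ioi i,
        ((Real.sinh (x i - x j) * Real.exp (-(x i - x j)) * (1 + (x i - x j))) *
        (Real.sinh (y i - y j) * Real.exp (-(y i - y j)) * (1 + (y i - y j))))) := by
    have hsinh : ∀ u : ℝ, 0 ≤ u → 0 ≤ Real.sinh u * Real.exp (-u) * (1 + u) := fun u hu => by
      have := Real.sinh_nonneg_iff.2 hu
      positivity
    have hleft : ∀ i, ∀ j ∈ Ioi i, 0 ≤ (y i - y j) *
        truncLength ((x i - x j) / (2 * t)) (y i - y j) * (t + (x i - x j) * (y i - y j)) :=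
      fun i j hj => by
        have h1 := hu i j hj
        have h2 := hv i j hj
        have h3 := truncLength_nonneg (u := (x i - x j) / (2 * t)) (by positivity) h2
        positivity
    have hright := fun i j hj => mul_nonneg (hsinh _ (hu i j hj)) (hsinh _ (hv i j hj))
    exact ComparableWith.prod (fun i _ => prod_nonneg (hleft i)) (fun i _ => prod_nonneg (hright i))
      fun i _ => ComparableWith.prod (hleft i) (hright i) fun j hj =>
        (comparableWith_truncLength_mul_add ht (hu i j hj) (hv i j hj)).trans zero_le_two
          (by norm_num) (((comparableWith_sinh_mul_exp_neg (hu i j hj)).mul zero_le_two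
            (hsinh _ (hu i j hj)) (hu i j hj) (hsinh _ (hv i j hj)) (hv i j hj)
            (comparableWith_sinh_mul_exp_neg (hv i j hj))).symm)
  have hxa : Antitone fun i => x i / (2 * t) := fun i j hij =>
    div_le_div_of_nonneg_right (hx hij) (by positivity)
  have hker := ((hdet _ y hxa hy).mul_left (mul_nonneg
    (Real.exp_pos (-((∑ k, x k ^ 2) + ∑ k, y k ^ 2) / (4 * t))).le hT0)).trans hC.le hD0.le
    (w := (∏ i : Fin n, ∏ j ∈ Finset.Ioi i, Real.sinh (x i - x j) * Real.sinh (y i - y j)) *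
              Real.exp (-rhoSum x - rhoSum y) *
              Real.exp (-(∑ k, (x k - y k) ^ 2) / (4 * t)) *
              ∏ i : Fin n, ∏ j ∈ Finset.Ioi i, (1 + x i - x j) * (1 + y i - y j)) (by
      convert hfac.mul_left (Real.exp_pos (-(∑ k, (x k - y k) ^ 2) / (4 * t))).le using 1
      · have hexp : Real.exp (-(∑ k, (x k - y k) ^ 2) / (4 * t)) =
            Real.exp (-((∑ k, x k ^ 2) + ∑ k, y k ^ 2) / (4 * t)) *
            Real.exp (∑ k, x k / (2 * t) * y k) := by
          rw [← Real.exp_add]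
          congr 1
          rw [← sum_add_distrib, ← sum_neg_distrib, ← sum_neg_distrib, sum_div, sum_div,
            ← sum_add_distrib]
          refine sum_congr rfl fun k _ => ?_
          field_simp
          ring
        rw [hexp]
        simp_rw [prod_mul_distrib, sub_div]
        ring
      · rw [sub_eq_add_neg (-rhoSum x), Real.exp_add, exp_neg_rhoSum, exp_neg_rhoSum]
        simp_rw [prod_mul_distrib, add_sub_assoc]
        ring)
  have hsum : (∑ σ : Equiv.Perm (Fin n), ((Equiv.Perm.sign σ : ℤ) : ℝ) *
      Real.exp ((1 / (2 * t)) * ∑ k, x (σ k) * y k)) =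
      (Matrix.of fun i j => Real.exp (x i / (2 * t) * y j)).det := by
    rw [Matrix.det_apply']
    refine sum_congr rfl fun σ _ => ?_
    simp_rw [Matrix.of_apply, ← Real.exp_sum, mul_sum]
    congr 3
    ext k
    ring
  rw [hsum, inv_mul_le_iff₀ (by positivity), mul_right_comm (Real.exp (-((∑ k, x k ^ 2) + _) / _))]
  exact ⟨hker.ge, hker.le⟩
end
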